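/- arXiv:1703.07058 — 3 statements merged into one kernel-verified Lean document; each statement's English description precedes it below -/
import Mathlib

section
/- Let n, k, l be integers with 1 ≤ k ≤ l and 2l < n, and let L be the Laplacian matrix of the I-graph I(n,k,l). Let 𝒜 be the companion matrix of the polynomial F(X) = (3X^k − X^{2k} − 1)(3X^l − X^{2l} − 1) − X^{k+l}. Then the cokernel of L is isomorphic as a ℤ-module to the cokernel of 𝒜^n − I, i.e. ℤ^{2n} / im(L) ≅ ℤ^{2(k+l)} / im(𝒜^n − I). -/
open Polynomial

/-- The relation generating the I-graph `I(n,k,l)`: `u_i ~ u_{i+l}`, `v_i ~ v_{i+k}`,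
`u_i ~ v_i` (the left summand are the `u`'s with step `l`, the right summand the `v`'s
with step `k`). -/
def IRel (n k l : ℕ) : (ZMod n ⊕ ZMod n) → (ZMod n ⊕ ZMod n) → Prop
  | .inl i, .inl j => j = i + (l : ZMod n)
  | .inr i, .inr j => j = i + (k : ZMod n)
  | .inl i, .inr j => i = j
  | .inr _, .inl _ => False

/-- The I-graph `I(n,k,l)`. -/
def IGraph (n k l : ℕ) : SimpleGraph (ZMod n ⊕ ZMod n) :=
  SimpleGraph.fromRel (IRel n k l)

noncomputable instance (n k l : ℕ) : DecidableRel (IGraph n k l).Adj :=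
  fun _ _ => Classical.dec _

/-- The number of spanning trees of the I-graph `I(n,k,l)`. -/
noncomputable def tauI (n k l : ℕ) : ℕ :=
  Nat.card {H : (IGraph n k l).Subgraph // H.IsSpanning ∧ H.coe.IsTree}

/-- The Laplacian matrix `L = D - A` of the I-graph, with entries in `R`. -/
noncomputable def lapI (n k l : ℕ) [NeZero n] (R : Type) [AddGroupWithOne R] :
    Matrix (ZMod n ⊕ ZMod n) (ZMod n ⊕ ZMod n) R :=
  (IGraph n k l).lapMatrix R

/-- The cokernel of a square integer matrix, viewed as a `ℤ`-linear map. -/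
abbrev cokerM {m : Type} [Fintype m] [DecidableEq m] (M : Matrix m m ℤ) : Type :=
  (m → ℤ) ⧸ LinearMap.range M.mulVecLin

/-- The polynomial `F(X) = (3X^k - X^{2k} - 1)(3X^l - X^{2l} - 1) - X^{k+l}`. -/
noncomputable def FpolyI (k l : ℕ) : Polynomial ℤ :=
  (3 * X ^ k - X ^ (2 * k) - 1) * (3 * X ^ l - X ^ (2 * l) - 1) - X ^ (k + l)

/-- The companion matrix of a (monic, degree `s`) polynomial
`F = X^s + a_{s-1} X^{s-1} + ⋯ + a_0`: ones on the superdiagonal and last row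
`(-a_0, …, -a_{s-1})`. -/
noncomputable def companionM (F : Polynomial ℤ) (s : ℕ) : Matrix (Fin s) (Fin s) ℤ :=
  fun i j => if (i : ℕ) = s - 1 then -F.coeff j
    else if (j : ℕ) = (i : ℕ) + 1 then 1 else 0

/-- The Jacobian group of the I-graph `I(n,k,l)`: the torsion subgroup of the cokernel of
the Laplacian. -/
noncomputable def JacI (n k l : ℕ) [NeZero n] : AddSubgroup (cokerM (lapI n k l ℤ)) :=
  AddCommGroup.torsion (cokerM (lapI n k l ℤ))

open scoped Matrix

section Companion

variable {F : ℤ[X]} {s : ℕ}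

/-- Evaluation of a polynomial at the matrix `A`, applied to the vector `v`. -/
noncomputable def aevalMulVec {m : Type} [Fintype m] [DecidableEq m] (A : Matrix m m ℤ)
    (v : m → ℤ) : ℤ[X] →ₗ[ℤ] (m → ℤ) where
  toFun p := aeval A p *ᵥ v
  map_add' p q := by rw [map_add, Matrix.add_mulVec]
  map_smul' c p := by rw [map_smul, Matrix.smul_mulVec, RingHom.id_apply]

lemma aevalMulVec_apply {m : Type} [Fintype m] [DecidableEq m] (A : Matrix m m ℤ)
    (v : m → ℤ) (p : ℤ[X]) : aevalMulVec A v p = aeval A p *ᵥ v := rfl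

lemma aevalMulVec_mul {m : Type} [Fintype m] [DecidableEq m] (A : Matrix m m ℤ)
    (v : m → ℤ) (p q : ℤ[X]) :
    aevalMulVec A v (p * q) = aeval A p *ᵥ aevalMulVec A v q := by
  simp only [aevalMulVec_apply, map_mul, Matrix.mulVec_mulVec]

lemma coeff_divX_iterate (F : ℤ[X]) (j m : ℕ) : (divX^[j] F).coeff m = F.coeff (m + j) := by
  induction j generalizing m with
  | zero => rfl
  | succ j ih => rw [Function.iterate_succ_apply', coeff_divX, ih]; congr 1; ring

lemma divX_iterate_eq_one (hF : F.Monic) (hs : F.natDegree = s) : divX^[s] F = 1 := by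
  ext m
  rw [coeff_divX_iterate, coeff_one]
  rcases m with _ | m
  · simp [← hs, hF]
  · rw [if_neg (by simp)]
    exact coeff_eq_zero_of_natDegree_lt (by omega)

lemma companionM_mulVec_single_succ {j : ℕ} (hj : j + 1 < s) :
    companionM F s *ᵥ Pi.single (⟨j + 1, hj⟩ : Fin s) 1 =
      Pi.single (⟨j, by omega⟩ : Fin s) 1 -
        F.coeff (j + 1) • Pi.single (⟨s - 1, by omega⟩ : Fin s) 1 := by
  ext i
  simp only [Matrix.mulVec_single_one, Matrix.col_apply, companionM, Pi.sub_apply, Pi.smul_apply,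
    Pi.single_apply, Fin.ext_iff, smul_eq_mul]
  split_ifs <;> omega

lemma companionM_mulVec_single_zero (hs : 0 < s) :
    companionM F s *ᵥ Pi.single (⟨0, hs⟩ : Fin s) 1 =
      - F.coeff 0 • Pi.single (⟨s - 1, by omega⟩ : Fin s) 1 := by
  ext i
  simp only [Matrix.mulVec_single_one, Matrix.col_apply, companionM, Pi.smul_apply,
    Pi.single_apply, Fin.ext_iff, smul_eq_mul]
  split_ifs <;> first | omega | simp_all

/-- The evaluation map at the companion matrix and its cyclic vector. -/
noncomputable def companionEval (F : ℤ[X]) (s : ℕ) (hs : 0 < s) : ℤ[X] →ₗ[ℤ] (Fin s → ℤ) :=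
  aevalMulVec (companionM F s) (Pi.single (⟨s - 1, by omega⟩ : Fin s) 1)

lemma companionEval_mul (hs : 0 < s) (p q : ℤ[X]) : companionEval F s hs (p * q) =
    aeval (companionM F s) p *ᵥ companionEval F s hs q :=
  aevalMulVec_mul _ _ p q

lemma companionEval_X_mul (hs : 0 < s) (q : ℤ[X]) : companionEval F s hs (X * q) =
    companionM F s *ᵥ companionEval F s hs q := by
  rw [companionEval_mul, aeval_X]

lemma companionEval_C (hs : 0 < s) (c : ℤ) : companionEval F s hs (C c) =
    c • Pi.single (⟨s - 1, by omega⟩ : Fin s) 1 := by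
  rw [companionEval, aevalMulVec_apply, aeval_C, Algebra.algebraMap_eq_smul_one,
    Matrix.smul_mulVec, Matrix.one_mulVec]

lemma companionEval_divX_iterate (hF : F.Monic) (hd : F.natDegree = s) (hs : 0 < s)
    (d j : ℕ) (hj : j + d + 1 = s) :
    companionEval F s hs (divX^[j + 1] F) = Pi.single (⟨j, by omega⟩ : Fin s) 1 := by
  induction d generalizing j with
  | zero =>
    have hj' : j + 1 = s := by omega
    rw [hj', divX_iterate_eq_one hF hd, ← C_1, companionEval_C, one_smul]
    congr 1
    ext
    simp only
    omega
  | succ d ih =>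
    rw [← divX_mul_X_add (divX^[j + 1] F), ← Function.iterate_succ_apply' divX, mul_comm, map_add,
      companionEval_X_mul, ih (j + 1) (by omega), companionEval_C,
      companionM_mulVec_single_succ, coeff_divX_iterate, zero_add, sub_add_cancel]

lemma companionEval_self (hF : F.Monic) (hd : F.natDegree = s) (hs : 0 < s) :
    companionEval F s hs F = 0 := by
  have h := companionEval_divX_iterate hF hd hs (s - 1) 0 (by omega)
  rw [zero_add, Function.iterate_one] at h
  nth_rw 2 [← divX_mul_X_add F]
  rw [mul_comm, map_add, companionEval_X_mul, h, companionEval_C,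
    companionM_mulVec_single_zero, neg_smul, neg_add_cancel]

lemma companionEval_surjective (hF : F.Monic) (hd : F.natDegree = s) (hs : 0 < s) :
    Function.Surjective (companionEval F s hs) := by
  rw [← LinearMap.range_eq_top, eq_top_iff, ← (Pi.basisFun ℤ (Fin s)).span_eq, Submodule.span_le]
  rintro _ ⟨j, rfl⟩
  refine ⟨divX^[j + 1] F, ?_⟩
  rw [companionEval_divX_iterate hF hd hs (s - 1 - j) j (by omega), Pi.basisFun_apply]

lemma companionEval_eq_zero_iff (hF : F.Monic) (hd : F.natDegree = s) (hs : 0 < s) (p : ℤ[X]) :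
    companionEval F s hs p = 0 ↔ F ∣ p := by
  have hmul (q : ℤ[X]) : companionEval F s hs (F * q) = 0 := by
    rw [mul_comm, companionEval_mul, companionEval_self hF hd, Matrix.mulVec_zero]
  have hmod (q : ℤ[X]) : companionEval F s hs (q %ₘ F) = companionEval F s hs q := by
    conv_rhs => rw [← modByMonic_add_div q F, map_add, hmul, add_zero]
  constructor
  · intro hp
    let f : (Fin s → ℤ) →ₗ[ℤ] (Fin s → ℤ) :=
      (companionEval F s hs) ∘ₗ (degreeLT ℤ s).subtype ∘ₗ (degreeLTEquiv ℤ s).symm.toLinearMap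
    have hlt (q : ℤ[X]) : q %ₘ F ∈ degreeLT ℤ s := by
      rw [mem_degreeLT, ← hd, ← degree_eq_natDegree hF.ne_zero]
      exact degree_modByMonic_lt q hF
    have hfapply (q : ℤ[X]) :
        f (degreeLTEquiv ℤ s ⟨q %ₘ F, hlt q⟩) = companionEval F s hs q := by
      simp [f, hmod]
    have hf : Function.Surjective f := fun v ↦ by
      obtain ⟨q, rfl⟩ := companionEval_surjective hF hd hs v
      exact ⟨_, hfapply q⟩
    have hinj := OrzechProperty.injective_of_surjective_endomorphism f hf
    have h0 : degreeLTEquiv ℤ s ⟨p %ₘ F, hlt p⟩ = 0 :=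
      hinj (by rw [hfapply, hp, map_zero])
    rw [LinearEquiv.map_eq_zero_iff, Submodule.mk_eq_zero] at h0
    exact (modByMonic_eq_zero_iff_dvd hF).1 h0
  · rintro ⟨q, rfl⟩
    exact hmul q

lemma companionEval_mem_range_iff (hF : F.Monic) (hd : F.natDegree = s) (hs : 0 < s) (n : ℕ)
    (p : ℤ[X]) :
    companionEval F s hs p ∈ LinearMap.range (companionM F s ^ n - 1).mulVecLin ↔
      p ∈ Ideal.span {F, X ^ n - 1} := by
  have hpow (q : ℤ[X]) : companionEval F s hs ((X ^ n - 1) * q) =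
      (companionM F s ^ n - 1).mulVecLin (companionEval F s hs q) := by
    rw [companionEval_mul, map_sub, map_pow, aeval_X, map_one, Matrix.mulVecLin_apply]
  rw [Ideal.mem_span_pair]
  constructor
  · rintro ⟨v, hv⟩
    obtain ⟨q, rfl⟩ := companionEval_surjective hF hd hs v
    rw [← hpow, ← sub_eq_zero, ← map_sub, companionEval_eq_zero_iff hF hd hs] at hv
    obtain ⟨r, hr⟩ := hv
    exact ⟨-r, q, by linear_combination hr⟩
  · rintro ⟨a, b, rfl⟩
    refine ⟨companionEval F s hs b, ?_⟩
    rw [← hpow, map_add, (companionEval_eq_zero_iff hF hd hs _).2 (dvd_mul_left F a), zero_add,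
      mul_comm]

end Companion

lemma FpolyI_monic_natDegree {k l : ℕ} (hk : 1 ≤ k) (hl : 1 ≤ l) :
    (FpolyI k l).Monic ∧ (FpolyI k l).natDegree = 2 * (k + l) := by
  have hq (m : ℕ) (hm : 1 ≤ m) : (X ^ (2 * m) + (1 - 3 * X ^ m) : ℤ[X]).Monic ∧
      (X ^ (2 * m) + (1 - 3 * X ^ m) : ℤ[X]).natDegree = 2 * m := by
    have hlt : (1 - 3 * X ^ m : ℤ[X]).degree < ((2 * m : ℕ) : WithBot ℕ) := by
      refine lt_of_le_of_lt (b := ((m : ℕ) : WithBot ℕ)) ?_ (by exact_mod_cast (by omega))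
      compute_degree!
    refine ⟨monic_X_pow_add hlt, ?_⟩
    rw [natDegree_eq_of_degree_eq_some]
    rw [degree_add_eq_left_of_degree_lt (by rwa [degree_X_pow]), degree_X_pow]
  obtain ⟨hk1, hk2⟩ := hq k hk
  obtain ⟨hl1, hl2⟩ := hq l hl
  have hF : FpolyI k l = (X ^ (2 * k) + (1 - 3 * X ^ k)) * (X ^ (2 * l) + (1 - 3 * X ^ l)) -
      X ^ (k + l) := by
    rw [FpolyI]; ring
  have hdeg := hk1.natDegree_mul hl1
  rw [hk2, hl2, ← mul_add] at hdeg
  have hlt : (X ^ (k + l) : ℤ[X]).degree <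
      ((X ^ (2 * k) + (1 - 3 * X ^ k)) * (X ^ (2 * l) + (1 - 3 * X ^ l)) : ℤ[X]).degree := by
    rw [degree_X_pow, degree_eq_natDegree (hk1.mul hl1).ne_zero, hdeg]
    exact_mod_cast (by omega)
  rw [hF]
  refine ⟨(hk1.mul hl1).sub_of_left hlt, ?_⟩
  rw [natDegree_eq_of_degree_eq (degree_sub_eq_left_of_degree_lt hlt), hdeg]

section Laplacian

variable {n k l : ℕ}

lemma ZMod.natCast_ne_zero_of_lt {m : ℕ} (h0 : 1 ≤ m) (hm : m < n) : (m : ZMod n) ≠ 0 := by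
  rw [Ne, ZMod.natCast_eq_zero_iff]
  exact fun h ↦ absurd (Nat.le_of_dvd h0 h) (by omega)

lemma ZMod.add_natCast_ne_sub {m : ℕ} (h0 : 1 ≤ m) (hm : 2 * m < n) (i : ZMod n) :
    i + (m : ZMod n) ≠ i - m := by
  intro h
  refine ZMod.natCast_ne_zero_of_lt (n := n) (m := 2 * m) (by omega) hm ?_
  push_cast
  linear_combination h

lemma adjMatrix_col_inl (hl : 1 ≤ l) (hln : 2 * l < n) (i : ZMod n) :
    ((IGraph n k l).adjMatrix ℤ).col (.inl i) =
      Pi.single (.inl (i + l)) 1 + Pi.single (.inl (i - l)) 1 + Pi.single (.inr i) 1 := by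
  have h0 : (l : ZMod n) ≠ 0 := ZMod.natCast_ne_zero_of_lt hl (by omega)
  have h1 := ZMod.add_natCast_ne_sub hl hln i
  ext (j | j)
  · have : (IGraph n k l).Adj (.inl j) (.inl i) ↔ j = i + l ∨ j = i - l := by
      simp only [IGraph, SimpleGraph.fromRel_adj, IRel, ne_eq, Sum.inl.injEq]
      grind
    simp only [Matrix.col_apply, SimpleGraph.adjMatrix_apply, this, Pi.add_apply, Pi.single_apply,
      Sum.inl.injEq, reduceCtorEq]
    grind
  · have : (IGraph n k l).Adj (.inr j) (.inl i) ↔ j = i := by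
      simp only [IGraph, SimpleGraph.fromRel_adj, IRel, ne_eq]
      grind
    simp [SimpleGraph.adjMatrix_apply, this, Pi.single_apply]

lemma adjMatrix_col_inr (hk : 1 ≤ k) (hkn : 2 * k < n) (i : ZMod n) :
    ((IGraph n k l).adjMatrix ℤ).col (.inr i) =
      Pi.single (.inr (i + k)) 1 + Pi.single (.inr (i - k)) 1 + Pi.single (.inl i) 1 := by
  have h0 : (k : ZMod n) ≠ 0 := ZMod.natCast_ne_zero_of_lt hk (by omega)
  have h1 := ZMod.add_natCast_ne_sub hk hkn i
  ext (j | j)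
  · have : (IGraph n k l).Adj (.inl j) (.inr i) ↔ j = i := by
      simp only [IGraph, SimpleGraph.fromRel_adj, IRel, ne_eq]
      grind
    simp [SimpleGraph.adjMatrix_apply, this, Pi.single_apply]
  · have : (IGraph n k l).Adj (.inr j) (.inr i) ↔ j = i + k ∨ j = i - k := by
      simp only [IGraph, SimpleGraph.fromRel_adj, IRel, ne_eq, Sum.inr.injEq]
      grind
    simp only [Matrix.col_apply, SimpleGraph.adjMatrix_apply, this, Pi.add_apply, Pi.single_apply,
      Sum.inr.injEq, reduceCtorEq]
    grind

variable [NeZero n]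

lemma SimpleGraph.degree_eq_sum_adjMatrix_col {V : Type} [Fintype V] (G : SimpleGraph V)
    [DecidableRel G.Adj] (v : V) :
    (G.degree v : ℤ) = ∑ w, (G.adjMatrix ℤ).col v w := by
  simp [SimpleGraph.adjMatrix_apply, G.adj_comm _ v, ← SimpleGraph.card_neighborFinset_eq_degree,
    SimpleGraph.neighborFinset_eq_filter]

lemma lapI_mulVec_single (v : ZMod n ⊕ ZMod n) : lapI n k l ℤ *ᵥ Pi.single v 1 =
    ((IGraph n k l).degree v : ℤ) • Pi.single v 1 - ((IGraph n k l).adjMatrix ℤ).col v := by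
  rw [lapI, SimpleGraph.lapMatrix, Matrix.sub_mulVec, SimpleGraph.degMatrix]
  congr 1
  · ext w
    simp [Matrix.mulVec_diagonal, Pi.single_apply]
    grind
  · simp

lemma lapI_mulVec_inl (hl : 1 ≤ l) (hln : 2 * l < n) (i : ZMod n) :
    lapI n k l ℤ *ᵥ Pi.single (.inl i) 1 = (3 : ℤ) • Pi.single (.inl i) 1 -
      (Pi.single (.inl (i + l)) 1 + Pi.single (.inl (i - l)) 1 + Pi.single (.inr i) 1) := by
  rw [lapI_mulVec_single, SimpleGraph.degree_eq_sum_adjMatrix_col, adjMatrix_col_inl hl hln]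
  simp [Finset.sum_add_distrib]

lemma lapI_mulVec_inr (hk : 1 ≤ k) (hkn : 2 * k < n) (i : ZMod n) :
    lapI n k l ℤ *ᵥ Pi.single (.inr i) 1 = (3 : ℤ) • Pi.single (.inr i) 1 -
      (Pi.single (.inr (i + k)) 1 + Pi.single (.inr (i - k)) 1 + Pi.single (.inl i) 1) := by
  rw [lapI_mulVec_single, SimpleGraph.degree_eq_sum_adjMatrix_col, adjMatrix_col_inr hk hkn]
  simp [Finset.sum_add_distrib]

end Laplacian

section CyclicEval

variable {n k l : ℕ} {M : Type} [AddCommGroup M]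

/-- The linear map on polynomials sending `X ^ m` to `u m`. -/
noncomputable def cyclicEval (u : ZMod n → M) : ℤ[X] →ₗ[ℤ] M :=
  (Polynomial.basisMonomials ℤ).constr ℤ fun m : ℕ ↦ u m

lemma cyclicEval_X_pow (u : ZMod n → M) (m : ℕ) : cyclicEval u (X ^ m) = u m := by
  have h : (X ^ m : ℤ[X]) = Polynomial.basisMonomials ℤ m := by
    rw [coe_basisMonomials, X_pow_eq_monomial]
  rw [cyclicEval, h, Module.Basis.constr_basis]

lemma cyclicEval_mul_eq_zero {u : ZMod n → M} {p : ℤ[X]}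
    (hp : ∀ m : ℕ, cyclicEval u (X ^ m * p) = 0) (q : ℤ[X]) : cyclicEval u (q * p) = 0 := by
  induction q using Polynomial.induction_on' with
  | add q r hq hr => rw [add_mul, map_add, hq, hr, add_zero]
  | monomial m c => rw [← smul_X_eq_monomial, smul_mul_assoc, map_smul, hp, smul_zero]

lemma cyclicEval_X_pow_mul_FpolyI {u v : ZMod n → M}
    (hu : ∀ i, (3 : ℤ) • u i = u (i + l) + u (i - l) + v i)
    (hv : ∀ i, (3 : ℤ) • v i = v (i + k) + v (i - k) + u i) (m : ℕ) :
    cyclicEval u (X ^ m * FpolyI k l) = 0 := by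
  have hu' (j : ℕ) : (3 : ℤ) • u (j + l : ℕ) =
      u (j + 2 * l : ℕ) + u j + v (j + l : ℕ) := by
    rw [hu]
    push_cast
    congr 3 <;> ring
  have hv' : (3 : ℤ) • v (m + k + l : ℕ) =
      v (m + 2 * k + l : ℕ) + v (m + l : ℕ) + u (m + k + l : ℕ) := by
    rw [hv]
    push_cast
    congr 3 <;> ring
  have hF : X ^ m * FpolyI k l = X ^ (m + 2 * k + 2 * l) - (3 : ℤ) • X ^ (m + 2 * k + l) +
      X ^ (m + 2 * k) - (3 : ℤ) • (X ^ (m + k + 2 * l) - (3 : ℤ) • X ^ (m + k + l) +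
      X ^ (m + k)) + (X ^ (m + 2 * l) - (3 : ℤ) • X ^ (m + l) + X ^ m) - X ^ (m + k + l) := by
    simp only [zsmul_eq_mul, FpolyI]
    push_cast
    ring
  rw [hF]
  simp only [map_add, map_sub, map_smul, cyclicEval_X_pow]
  linear_combination (norm := module) -hu' (m + 2 * k) + (3 : ℤ) • hu' (m + k) - hu' m + hv'

lemma cyclicEval_eq_zero_of_mem_span {u v : ZMod n → M}
    (hu : ∀ i, (3 : ℤ) • u i = u (i + l) + u (i - l) + v i)
    (hv : ∀ i, (3 : ℤ) • v i = v (i + k) + v (i - k) + u i) {p : ℤ[X]}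
    (hp : p ∈ Ideal.span {FpolyI k l, X ^ n - 1}) : cyclicEval u p = 0 := by
  obtain ⟨a, b, rfl⟩ := Ideal.mem_span_pair.1 hp
  rw [map_add, cyclicEval_mul_eq_zero (cyclicEval_X_pow_mul_FpolyI hu hv), zero_add]
  refine cyclicEval_mul_eq_zero (fun m ↦ ?_) b
  rw [mul_sub, ← pow_add, mul_one, map_sub, cyclicEval_X_pow, cyclicEval_X_pow]
  simp

end CyclicEval

lemma pow_val_add {Q : Type} [Monoid Q] {n : ℕ} [NeZero n] {x : Q} (hx : x ^ n = 1)
    (i j : ZMod n) : x ^ (i + j).val = x ^ i.val * x ^ j.val := by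
  rw [ZMod.val_add, ← pow_eq_pow_mod _ hx, pow_add]

lemma pow_val_natCast {Q : Type} [Monoid Q] {n : ℕ} {x : Q} (hx : x ^ n = 1)
    (m : ℕ) : x ^ (m : ZMod n).val = x ^ m := by
  rw [ZMod.val_natCast, ← pow_eq_pow_mod _ hx]

section Coker

variable {n k l : ℕ} [NeZero n]

/-- The linear map sending `u_i` to `x ^ i` and `v_i` to `x ^ i * (3 - x ^ l - x ^ (-l))`, for an
element `x` of a ring (intended to satisfy `x ^ n = 1`). -/
noncomputable def lapQuotMap {Q : Type} [CommRing Q] (n l : ℕ) [NeZero n] (x : Q) :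
    (ZMod n ⊕ ZMod n → ℤ) →ₗ[ℤ] Q :=
  (Pi.basisFun ℤ (ZMod n ⊕ ZMod n)).constr ℤ (Sum.elim (fun i ↦ x ^ i.val)
    fun i ↦ x ^ i.val * (3 - x ^ (l : ZMod n).val - x ^ (-(l : ZMod n)).val))

lemma lapQuotMap_single {Q : Type} [CommRing Q] (x : Q) (w : ZMod n ⊕ ZMod n) :
    lapQuotMap n l x (Pi.single w 1) = Sum.elim (fun i : ZMod n ↦ x ^ i.val)
      (fun i ↦ x ^ i.val * (3 - x ^ (l : ZMod n).val - x ^ (-(l : ZMod n)).val)) w := by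
  rw [lapQuotMap, ← Pi.basisFun_apply, Module.Basis.constr_basis]

lemma lapQuotMap_comp_lapI {Q : Type} [CommRing Q] {x : Q} (hx : x ^ n = 1)
    (hF : aeval x (FpolyI k l) = 0)
    (hk : 1 ≤ k) (hkn : 2 * k < n) (hl : 1 ≤ l) (hln : 2 * l < n) :
    lapQuotMap n l x ∘ₗ (lapI n k l ℤ).mulVecLin = 0 := by
  have hinv (m : ℕ) : x ^ m * x ^ (-(m : ZMod n)).val = 1 := by
    rw [← pow_val_natCast hx m, ← pow_val_add hx]
    simp
  refine (Pi.basisFun ℤ (ZMod n ⊕ ZMod n)).ext ?_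
  rintro (i | i) <;> rw [Pi.basisFun_apply, LinearMap.comp_apply, Matrix.mulVecLin_apply]
  · rw [lapI_mulVec_inl hl hln]
    simp only [map_add, map_sub, map_smul, lapQuotMap_single, Sum.elim_inl, Sum.elim_inr,
      sub_eq_add_neg i, pow_val_add hx, LinearMap.zero_apply]
    rw [zsmul_eq_mul]
    push_cast
    ring
  · rw [lapI_mulVec_inr hk hkn]
    simp only [map_add, map_sub, map_smul, lapQuotMap_single, Sum.elim_inl, Sum.elim_inr,
      sub_eq_add_neg i, pow_val_add hx, LinearMap.zero_apply, pow_val_natCast hx]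
    rw [zsmul_eq_mul]
    have hk' := hinv k
    have hl' := hinv l
    simp only [FpolyI, map_sub, map_mul, map_pow, aeval_X, map_one, map_ofNat, mul_comm 2,
      pow_mul, pow_add] at hF
    push_cast
    generalize x ^ (-(k : ZMod n)).val = a' at *
    generalize x ^ (-(l : ZMod n)).val = b' at *
    generalize x ^ k = a at *
    generalize x ^ l = b at *
    have ha : (3 * a - a ^ 2 - 1) * a' = 3 - a - a' := by linear_combination (3 - a) * hk'
    have hb : (3 * b - b ^ 2 - 1) * b' = 3 - b - b' := by linear_combination (3 - b) * hl'
    have hab : (3 - a - a') * (3 - b - b') = 1 := by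
      rw [← ha, ← hb]
      linear_combination a' * b' * hF + hk' * b * b' + hl'
    linear_combination x ^ i.val * hab

/-- The class of the vertex `w` in the cokernel of the Laplacian. -/
noncomputable def vertexClass (n k l : ℕ) [NeZero n] (w : ZMod n ⊕ ZMod n) :
    cokerM (lapI n k l ℤ) :=
  Submodule.Quotient.mk (Pi.single w 1)

lemma vertexClass_inl (hl : 1 ≤ l) (hln : 2 * l < n) (i : ZMod n) :
    (3 : ℤ) • vertexClass n k l (.inl i) = vertexClass n k l (.inl (i + l)) +
      vertexClass n k l (.inl (i - l)) + vertexClass n k l (.inr i) := by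
  simp only [vertexClass, ← Submodule.Quotient.mk_smul, ← Submodule.Quotient.mk_add]
  rw [Submodule.Quotient.eq]
  exact ⟨_, lapI_mulVec_inl hl hln i⟩

lemma vertexClass_inr (hk : 1 ≤ k) (hkn : 2 * k < n) (i : ZMod n) :
    (3 : ℤ) • vertexClass n k l (.inr i) = vertexClass n k l (.inr (i + k)) +
      vertexClass n k l (.inr (i - k)) + vertexClass n k l (.inl i) := by
  simp only [vertexClass, ← Submodule.Quotient.mk_smul, ← Submodule.Quotient.mk_add]
  rw [Submodule.Quotient.eq]
  exact ⟨_, lapI_mulVec_inr hk hkn i⟩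

lemma cyclicEval_vertexClass_surjective (hl : 1 ≤ l) (hln : 2 * l < n) :
    Function.Surjective (cyclicEval fun i ↦ vertexClass n k l (.inl i)) := by
  set ψ := cyclicEval fun i ↦ vertexClass n k l (.inl i) with hψ
  have hinl (i : ZMod n) : vertexClass n k l (.inl i) ∈ LinearMap.range ψ :=
    ⟨X ^ i.val, by rw [hψ, cyclicEval_X_pow, ZMod.natCast_zmod_val]⟩
  have hinr (i : ZMod n) : vertexClass n k l (.inr i) ∈ LinearMap.range ψ := by
    rw [eq_sub_iff_add_eq'.2 (vertexClass_inl hl hln i).symm]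
    exact sub_mem (Submodule.smul_mem _ _ (hinl _)) (add_mem (hinl _) (hinl _))
  have htop : (LinearMap.range ψ).comap (Submodule.mkQ _) = ⊤ := by
    rw [eq_top_iff, ← (Pi.basisFun ℤ (ZMod n ⊕ ZMod n)).span_eq, Submodule.span_le]
    rintro _ ⟨i | i, rfl⟩ <;> rw [Pi.basisFun_apply]
    exacts [hinl i, hinr i]
  intro w
  obtain ⟨f, rfl⟩ := Submodule.Quotient.mk_surjective _ w
  exact htop.ge (Submodule.mem_top (x := f))

lemma cyclicEval_vertexClass_eq_zero_iff
    (hk : 1 ≤ k) (hkn : 2 * k < n) (hl : 1 ≤ l) (hln : 2 * l < n) (p : ℤ[X]) :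
    cyclicEval (fun i ↦ vertexClass n k l (.inl i)) p = 0 ↔
      p ∈ Ideal.span {FpolyI k l, X ^ n - 1} := by
  refine ⟨fun hp ↦ ?_, cyclicEval_eq_zero_of_mem_span (vertexClass_inl hl hln)
    (vertexClass_inr hk hkn)⟩
  set J : Ideal ℤ[X] := Ideal.span {FpolyI k l, X ^ n - 1}
  let x : ℤ[X] ⧸ J := Ideal.Quotient.mk J X
  have hx : x ^ n = 1 := by
    rw [← map_pow, ← map_one (Ideal.Quotient.mk J), Ideal.Quotient.eq]
    exact Ideal.subset_span (by simp)
  have haeval (q : ℤ[X]) : aeval x q = Ideal.Quotient.mk J q := by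
    rw [show x = Ideal.Quotient.mkₐ ℤ J X from rfl, aeval_algHom_apply, aeval_X_left_apply]
    rfl
  have hF : aeval x (FpolyI k l) = 0 := by
    rw [haeval, Ideal.Quotient.eq_zero_iff_mem]
    exact Ideal.subset_span (by simp)
  let θ : cokerM (lapI n k l ℤ) →ₗ[ℤ] ℤ[X] ⧸ J :=
    Submodule.liftQ _ (lapQuotMap n l x)
      (LinearMap.range_le_ker_iff.2 (lapQuotMap_comp_lapI hx hF hk hkn hl hln))
  have hθ : θ ∘ₗ cyclicEval (fun i ↦ vertexClass n k l (.inl i)) =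
      (aeval x : ℤ[X] →ₐ[ℤ] ℤ[X] ⧸ J).toLinearMap := by
    refine (Polynomial.basisMonomials ℤ).ext fun m ↦ ?_
    simp only [coe_basisMonomials, ← X_pow_eq_monomial]
    rw [LinearMap.comp_apply, cyclicEval_X_pow]
    have : θ (vertexClass n k l (.inl (m : ZMod n))) =
      lapQuotMap n l x (Pi.single (.inl (m : ZMod n)) 1) := rfl
    rw [this, lapQuotMap_single, Sum.elim_inl, pow_val_natCast hx]
    simp
  rw [← Ideal.Quotient.eq_zero_iff_mem, ← haeval]
  have h := LinearMap.congr_fun hθ p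
  rw [LinearMap.comp_apply, hp, map_zero] at h
  exact h.symm

end Coker

/-- The cokernel of the Laplacian of the I-graph `I(n,k,l)` is isomorphic as a
`ℤ`-module to the cokernel of `𝒜^n - I`, where `𝒜` is the companion matrix of
`F(X) = (3X^k - X^{2k} - 1)(3X^l - X^{2l} - 1) - X^{k+l}`. -/
theorem coker_laplacian_IGraph (n k l : ℕ) [NeZero n]
    (hk : 1 ≤ k) (hkl : k ≤ l) (hn : 2 * l < n) :
    Nonempty (cokerM (lapI n k l ℤ) ≃ₗ[ℤ]
      cokerM (companionM (FpolyI k l) (2 * (k + l)) ^ n - 1)) := by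
  obtain ⟨hF, hd⟩ := FpolyI_monic_natDegree hk (hk.trans hkl)
  have hs : 0 < 2 * (k + l) := by omega
  let ψ := cyclicEval fun i ↦ vertexClass n k l (.inl i)
  let φ := Submodule.mkQ (LinearMap.range
    (companionM (FpolyI k l) (2 * (k + l)) ^ n - 1).mulVecLin) ∘ₗ
      companionEval (FpolyI k l) (2 * (k + l)) hs
  have hψ : Function.Surjective ψ := cyclicEval_vertexClass_surjective (hk.trans hkl) hn
  have hφ : Function.Surjective φ :=
    (Submodule.mkQ_surjective _).comp (companionEval_surjective hF hd hs)
  have hker : LinearMap.ker ψ = LinearMap.ker φ := by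
    ext p
    rw [LinearMap.mem_ker, LinearMap.mem_ker, cyclicEval_vertexClass_eq_zero_iff hk (by omega)
      (hk.trans hkl) hn, LinearMap.comp_apply, Submodule.mkQ_apply, Submodule.Quotient.mk_eq_zero,
      companionEval_mem_range_iff hF hd hs]
  exact ⟨(ψ.quotKerEquivOfSurjective hψ).symm ≪≫ₗ Submodule.quotEquivOfEq _ _ hker ≪≫ₗ
    φ.quotKerEquivOfSurjective hφ⟩
end

section
/- Let n, k, l be integers with 1 ≤ k ≤ l, 2l < n and gcd(k,l) = 1. Let Q ∈ ℂ[X] be the polynomial of degree k+l−1 satisfying (X − 1)·Q(X) = (3 − 2T_k(X))(3 − 2T_l(X)) − 1. Then the number τ_{k,l}(n) of spanning trees of the I-graph I(n,k,l) satisfies, in ℂ, τ_{k,l}(n) = (−1)^{(n−1)(k+l)} · n · ∏_{w} (T_n(w) − 1)/(w − 1), where the product is over the multiset of complex roots w of Q counted with multiplicity. -/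
open Polynomial

open Finset in
theorem det_sum_vecMulVec {V E R : Type*} [Fintype V] [DecidableEq V] [DecidableEq E]
    [CommRing R] (F : Finset E) (a b : E → V → R) :
    (∑ e ∈ F, Matrix.vecMulVec (a e) (b e)).det =
      ∑ r ∈ Fintype.piFinset fun _ : V => F,
        (∏ i, a (r i) i) * Matrix.det (Matrix.of fun i => b (r i)) := by
  have h : (∑ e ∈ F, Matrix.vecMulVec (a e) (b e)) = fun i => ∑ e ∈ F, a e i • b e := by
    ext i j
    simp [Matrix.sum_apply, Matrix.vecMulVec_apply]
  rw [h]
  change Matrix.detRowAlternating.toMultilinearMap _ = _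
  rw [MultilinearMap.map_sum_finset]
  refine sum_congr rfl fun r _ => ?_
  rw [MultilinearMap.map_smul_univ]
  rfl

open Finset in
/-- The Cauchy–Binet formula for a sum of rank one matrices. -/
theorem det_sum_vecMulVec_eq_sum_powersetCard {V E R : Type*} [Fintype V] [DecidableEq V]
    [DecidableEq E] [CommRing R] (F : Finset E) (a b : E → V → R) :
    (∑ e ∈ F, Matrix.vecMulVec (a e) (b e)).det =
      ∑ S ∈ F.powersetCard (Fintype.card V),
        (∑ e ∈ S, Matrix.vecMulVec (a e) (b e)).det := by
  simp_rw [det_sum_vecMulVec]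
  set t : (V → E) → R := fun r =>
    (∏ i, a (r i) i) * Matrix.det (Matrix.of fun i => b (r i)) with ht
  have hinj : ∀ r : V → E, ¬ Function.Injective r → t r = 0 := by
    intro r hr
    obtain ⟨i, j, hij, hne⟩ : ∃ i j, r i = r j ∧ i ≠ j := by
      simpa [Function.Injective] using hr
    rw [ht]
    simp only
    rw [Matrix.det_zero_of_row_eq hne (by ext; simp [hij]), mul_zero]
  have hS : ∀ S ∈ F.powersetCard (Fintype.card V),
      ∑ r ∈ Fintype.piFinset (fun _ : V => S), t r =
        ∑ r ∈ Fintype.piFinset (fun _ : V => F), if univ.image r ⊆ S then t r else 0 := by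
    intro S hS
    rw [← sum_filter]
    refine sum_congr ?_ fun _ _ => rfl
    ext r
    simp only [Fintype.mem_piFinset, mem_filter, image_subset_iff, mem_univ, true_imp_iff]
    exact ⟨fun h => ⟨fun i => (mem_powersetCard.1 hS).1 (h i), h⟩, fun h => h.2⟩
  change ∑ r ∈ _, t r = ∑ S ∈ _, ∑ r ∈ _, t r
  rw [sum_congr rfl hS, sum_comm]
  refine sum_congr rfl fun r hr => ?_
  by_cases hri : Function.Injective r
  · have hc : (univ.image r).card = Fintype.card V := by
      rw [card_image_of_injective _ hri, card_univ]
    rw [sum_eq_single (univ.image r), if_pos subset_rfl]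
    · intro S hS hne
      rw [if_neg fun h => hne (eq_of_subset_of_card_le h ?_).symm]
      rw [(mem_powersetCard.1 hS).2, hc]
    · intro h
      refine absurd (mem_powersetCard.2 ⟨?_, hc⟩) h
      simpa [image_subset_iff] using hr
  · simp [hinj r hri]

theorem det_sum_vecMulVec_self {V E R : Type*} [Fintype V] [DecidableEq V]
    [CommRing R] (S : Finset E) (a : E → V → R) (g : V ≃ S) :
    (∑ e ∈ S, Matrix.vecMulVec (a e) (a e)).det = (Matrix.of fun i : V => a (g i)).det ^ 2 := by
  have h : ∑ e ∈ S, Matrix.vecMulVec (a e) (a e) =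
      (Matrix.of fun i : V => a (g i)).transpose * (Matrix.of fun i : V => a (g i)) := by
    ext i j
    rw [← Finset.sum_coe_sort, ← g.sum_comp]
    simp [Matrix.sum_apply, Matrix.vecMulVec_apply, Matrix.mul_apply]
  rw [h, Matrix.det_mul, Matrix.det_transpose, sq]

/-- If the vectors `a e`, `e ∈ S`, span the lattice and there are as many of them as its rank,
then their Gram-type determinant is `1`. -/
theorem det_sum_vecMulVec_eq_one_of_span_eq_top {V E : Type*} [Fintype V] [DecidableEq V]
    (S : Finset E) (a : E → V → ℤ) (hS : S.card = Fintype.card V)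
    (hspan : Submodule.span ℤ (a '' S) = ⊤) :
    (∑ e ∈ S, Matrix.vecMulVec (a e) (a e)).det = 1 := by
  classical
  have g : V ≃ S := Fintype.equivOfCardEq (by simp [hS])
  rw [det_sum_vecMulVec_self S a g]
  have hsurj : Function.Surjective (Matrix.of fun i : V => a (g i)).vecMul := by
    have : LinearMap.range (Matrix.of fun i : V => a (g i)).vecMulLinear = ⊤ := by
      rw [range_vecMulLinear, ← hspan]
      congr 1
      ext x
      constructor
      · rintro ⟨i, rfl⟩
        exact ⟨g i, (g i).2, rfl⟩
      · rintro ⟨e, he, rfl⟩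
        exact ⟨g.symm ⟨e, he⟩, by
          change a (g (g.symm ⟨e, he⟩)) = a e
          rw [g.apply_symm_apply]⟩
    exact LinearMap.range_eq_top.1 this
  have hu := (Matrix.isUnit_iff_isUnit_det _).1 (Matrix.vecMul_surjective_iff_isUnit.1 hsurj)
  obtain h | h := Int.isUnit_iff.1 hu <;> simp [h]

/-- If a nonzero vector is orthogonal to all `a e`, `e ∈ S`, the determinant vanishes. -/
theorem det_sum_vecMulVec_eq_zero_of_dotProduct_eq_zero {V E R : Type*} [Fintype V]
    [DecidableEq V] [CommRing R] [IsDomain R] (S : Finset E) (a b : E → V → R) (x : V → R)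
    (hx : x ≠ 0) (h : ∀ e ∈ S, b e ⬝ᵥ x = 0) :
    (∑ e ∈ S, Matrix.vecMulVec (a e) (b e)).det = 0 := by
  refine Matrix.exists_mulVec_eq_zero_iff.1 ⟨x, hx, ?_⟩
  rw [Matrix.sum_mulVec]
  refine Finset.sum_eq_zero fun e he => ?_
  rw [Matrix.vecMulVec_mulVec, h e he]
  simp

namespace SimpleGraph

/-- The column of the oriented incidence matrix belonging to the edge `e`, for an arbitrary choice
of orientation. -/
noncomputable def orientedIncVec {V : Type*} [DecidableEq V] (e : Sym2 V) : V → ℤ :=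
  Pi.single (Quot.out e).1 1 - Pi.single (Quot.out e).2 1

theorem orientedIncVec_mk {V : Type*} [DecidableEq V] (u v : V) :
    orientedIncVec s(u, v) = Pi.single u 1 - Pi.single v 1 ∨
      orientedIncVec s(u, v) = -(Pi.single u 1 - Pi.single v 1) := by
  have h : s((Quot.out s(u, v)).1, (Quot.out s(u, v)).2) = s(u, v) := Quot.out_eq s(u, v)
  unfold orientedIncVec
  obtain ⟨h₁, h₂⟩ | ⟨h₁, h₂⟩ := Sym2.eq_iff.1 h <;> rw [h₁, h₂]
  · exact Or.inl rfl
  · exact Or.inr (neg_sub _ _).symm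

theorem orientedIncVec_mul_orientedIncVec {V : Type*} [DecidableEq V] (G : SimpleGraph V)
    [DecidableRel G.Adj] {e : Sym2 V} (he : e ∈ G.edgeSet) (i j : V) :
    orientedIncVec e i * orientedIncVec e j =
      (if i = j then 1 else -1) * (G.incMatrix ℤ i e * G.incMatrix ℤ j e) := by
  induction e with | _ u v => ?_
  have huv : G.Adj u v := he
  have hne := huv.ne
  have h : orientedIncVec s(u, v) i * orientedIncVec s(u, v) j =
      ((Pi.single u 1 : V → ℤ) i - (Pi.single v 1 : V → ℤ) i) *
        ((Pi.single u 1 : V → ℤ) j - (Pi.single v 1 : V → ℤ) j) := by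
    obtain h | h := orientedIncVec_mk u v
    · simp [h]
    · simp [h]
      ring
  rw [h]
  simp only [incMatrix_apply', mk'_mem_incidenceSet_iff, huv, true_and, Pi.single_apply]
  grind

theorem sum_vecMulVec_orientedIncVec {V : Type*} [Fintype V] [DecidableEq V] (G : SimpleGraph V)
    [DecidableRel G.Adj] :
    ∑ e ∈ G.edgeFinset, Matrix.vecMulVec (orientedIncVec e) (orientedIncVec e) =
      G.lapMatrix ℤ := by
  ext i j
  rw [Matrix.sum_apply]
  simp only [Matrix.vecMulVec_apply]
  rw [Finset.sum_congr rfl fun e he =>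
    G.orientedIncVec_mul_orientedIncVec (mem_edgeFinset.1 he) i j, ← Finset.mul_sum,
    Finset.sum_subset (Finset.subset_univ _)]
  · have h := congrFun (congrFun (G.incMatrix_mul_transpose (R := ℤ)) i) j
    simp only [Matrix.mul_apply, Matrix.transpose_apply] at h
    rw [h]
    by_cases hij : i = j
    · subst hij
      simp [lapMatrix, degMatrix]
    · by_cases hadj : G.Adj i j <;> simp [lapMatrix, degMatrix, hij, hadj]
  · intro e _ he
    rw [G.incMatrix_of_notMem_incidenceSet fun h => he (mem_edgeFinset.2 h.1), zero_mul]

/-- The columns of the oriented incidence matrix, together with the unit vector at the root `r`. -/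
noncomputable def rootedIncVec {V : Type*} [DecidableEq V] (r : V) : Option (Sym2 V) → V → ℤ
  | none => Pi.single r 1
  | some e => orientedIncVec e

theorem span_rootedIncVec_eq_top {V : Type*} [Fintype V] [DecidableEq V] (H : SimpleGraph V)
    (hH : H.Connected) (r : V) (S : Set (Option (Sym2 V))) (hnone : none ∈ S)
    (hS : ∀ e ∈ H.edgeSet, some e ∈ S) : Submodule.span ℤ (rootedIncVec r '' S) = ⊤ := by
  set W := Submodule.span ℤ (rootedIncVec r '' S)
  have hsub : ∀ o ∈ S, rootedIncVec r o ∈ W := fun o ho =>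
    Submodule.subset_span (Set.mem_image_of_mem _ ho)
  have hstep : ∀ u v, H.Adj u v → (Pi.single u 1 : V → ℤ) ∈ W → (Pi.single v 1 : V → ℤ) ∈ W := by
    intro u v huv hu
    have he : orientedIncVec s(u, v) ∈ W := hsub _ (hS s(u, v) huv)
    have hd : (Pi.single u 1 - Pi.single v 1 : V → ℤ) ∈ W := by
      obtain h | h := orientedIncVec_mk u v
      · rwa [h] at he
      · rw [h] at he
        exact neg_mem_iff.1 he
    simpa using W.sub_mem hu hd
  have hall : ∀ v, (Pi.single v 1 : V → ℤ) ∈ W := by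
    intro v
    obtain ⟨p⟩ := hH.preconnected r v
    have hr : (Pi.single r 1 : V → ℤ) ∈ W := hsub none hnone
    clear_value W
    clear hsub
    induction p with
    | nil => exact hr
    | cons h _ ih => exact ih (hstep _ _ h hr)
  refine eq_top_iff.2 fun x _ => ?_
  rw [pi_eq_sum_univ x]
  refine W.sum_mem fun i _ => W.smul_mem _ ?_
  convert hall i using 1
  ext j
  simp [Pi.single_apply, eq_comm]

theorem orientedIncVec_dotProduct_eq_zero {V : Type*} [Fintype V] [DecidableEq V] (x : V → ℤ)
    (u v : V) (h : x u = x v) : orientedIncVec s(u, v) ⬝ᵥ x = 0 := by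
  obtain h' | h' := orientedIncVec_mk u v <;> simp [h', sub_dotProduct, h]

theorem connected_of_det_ne_zero {V : Type*} [Fintype V] [DecidableEq V] (H : SimpleGraph V)
    (r : V) (S : Finset (Option (Sym2 V))) (hS : ∀ e, some e ∈ S → e ∈ H.edgeSet)
    (hdet : (∑ o ∈ S, Matrix.vecMulVec (rootedIncVec r o) (rootedIncVec r o)).det ≠ 0) :
    H.Connected := by
  classical
  by_contra hH
  obtain ⟨v, hv⟩ : ∃ v, ¬ H.Reachable r v := by
    by_contra! h
    exact hH ((connected_iff_exists_forall_reachable H).2 ⟨r, h⟩)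
  refine hdet (det_sum_vecMulVec_eq_zero_of_dotProduct_eq_zero _ _ _
    (fun u => if H.Reachable r u then 0 else 1) ?_ ?_)
  · intro h
    simpa [hv] using congrFun h v
  · rintro (_ | e) ho
    · simp [rootedIncVec]
    · induction e with | _ a b => ?_
      have hab : H.Adj a b := hS _ ho
      refine orientedIncVec_dotProduct_eq_zero _ a b ?_
      have : H.Reachable r a ↔ H.Reachable r b :=
        ⟨fun h => h.trans hab.reachable, fun h => h.trans hab.symm.reachable⟩
      simp [this]

theorem none_mem_of_det_ne_zero {V : Type*} [Fintype V] [DecidableEq V]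
    (r : V) (S : Finset (Option (Sym2 V)))
    (hdet : (∑ o ∈ S, Matrix.vecMulVec (rootedIncVec r o) (rootedIncVec r o)).det ≠ 0) :
    none ∈ S := by
  by_contra hn
  refine hdet (det_sum_vecMulVec_eq_zero_of_dotProduct_eq_zero _ _ _ (fun _ => 1)
    (fun h => one_ne_zero (congrFun h r)) ?_)
  rintro (_ | e) ho
  · exact absurd ho hn
  · induction e with | _ a b => exact orientedIncVec_dotProduct_eq_zero _ a b rfl

/-- **Kirchhoff's matrix-tree theorem**: adding `1` to one diagonal entry of the Laplacian matrix
gives a matrix whose determinant is the number of spanning trees. -/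
theorem det_lapMatrix_add_single {V : Type*} [Fintype V] [DecidableEq V] (G : SimpleGraph V)
    [DecidableRel G.Adj] (r : V) :
    (G.lapMatrix ℤ + Matrix.vecMulVec (Pi.single r 1) (Pi.single r 1)).det =
      (Nat.card {H : SimpleGraph V // H ≤ G ∧ H.IsTree} : ℤ) := by
  classical
  have hL : G.lapMatrix ℤ + Matrix.vecMulVec (Pi.single r 1) (Pi.single r 1) =
      ∑ o ∈ G.edgeFinset.insertNone,
        Matrix.vecMulVec (rootedIncVec r o) (rootedIncVec r o) := by
    rw [Finset.sum_insertNone, ← sum_vecMulVec_orientedIncVec, add_comm]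
    rfl
  rw [hL, det_sum_vecMulVec_eq_sum_powersetCard, Nat.card_eq_fintype_card, Fintype.card_subtype,
    Finset.card_eq_sum_ones, Nat.cast_sum]
  symm
  refine Finset.sum_of_injOn (fun H => H.edgeFinset.insertNone) ?_ ?_ ?_ ?_
  · intro H _ H' _ h
    exact edgeFinset_inj.1 (Finset.insertNone.injective h)
  · intro H hH
    simp only [Finset.coe_filter, Set.mem_ofPred_eq, Finset.mem_univ, true_and] at hH
    rw [Finset.mem_coe, Finset.mem_powersetCard]
    refine ⟨Finset.insertNone.monotone (edgeFinset_mono hH.1), ?_⟩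
    rw [Finset.card_insertNone, hH.2.card_edgeFinset]
  · intro S hS himage
    by_contra hdet
    rw [Finset.mem_powersetCard] at hS
    have hnone := none_mem_of_det_ne_zero r S hdet
    have hE : ∀ e, some e ∈ S → e ∈ G.edgeSet := fun e he =>
      mem_edgeFinset.1 (Finset.some_mem_insertNone.1 (hS.1 he))
    set H := fromEdgeSet {e | some e ∈ S} with hHdef
    have hedge : ∀ e, e ∈ H.edgeSet ↔ some e ∈ S := by
      intro e
      rw [hHdef, edgeSet_fromEdgeSet]
      exact ⟨fun h => h.1, fun h => ⟨h, G.not_isDiag_of_mem_edgeSet (hE e h)⟩⟩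
    have hSH : H.edgeFinset.insertNone = S := by
      ext (_ | e)
      · simp [hnone]
      · rw [Finset.some_mem_insertNone, mem_edgeFinset, hedge]
    refine himage ⟨H, ?_, by convert hSH⟩
    simp only [Finset.coe_filter, Set.mem_ofPred_eq, Finset.mem_univ, true_and]
    refine ⟨?_, isTree_iff_connected_and_card.2
      ⟨connected_of_det_ne_zero H r S (fun e => (hedge e).2) hdet, ?_⟩⟩
    · rw [← edgeSet_subset_edgeSet]
      exact fun e he => hE e ((hedge e).1 he)
    · rw [Nat.card_eq_fintype_card, Nat.card_eq_fintype_card, ← edgeFinset_card,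
        ← Finset.card_insertNone, hSH, hS.2]
  · intro H hH
    simp only [Finset.mem_filter, Finset.mem_univ, true_and] at hH
    rw [det_sum_vecMulVec_eq_one_of_span_eq_top, Nat.cast_one]
    · rw [Finset.card_insertNone, hH.2.card_edgeFinset]
    · refine span_rootedIncVec_eq_top H hH.2.connected r _ (by simp) fun e he => ?_
      rw [Finset.mem_coe, Finset.some_mem_insertNone, mem_edgeFinset]
      exact he

/-- Spanning subgraphs that are trees correspond to trees on the same vertex set contained in the
graph. -/
theorem card_spanning_isTree {V : Type*} (G : SimpleGraph V) :
    Nat.card {H : G.Subgraph // H.IsSpanning ∧ H.coe.IsTree} =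
      Nat.card {H : SimpleGraph V // H ≤ G ∧ H.IsTree} := by
  refine Nat.card_congr
    { toFun := fun H => ⟨H.1.spanningCoe, H.1.spanningCoe_le,
        (H.1.spanningCoeEquivCoeOfSpanning H.2.1).isTree_iff.2 H.2.2⟩
      invFun := fun H => ⟨toSubgraph H.1 H.2.1, toSubgraph.isSpanning _ _,
        ((toSubgraph H.1 H.2.1).spanningCoeEquivCoeOfSpanning
          (toSubgraph.isSpanning _ _)).isTree_iff.1 H.2.2⟩
      left_inv := ?_
      right_inv := fun H => rfl }
  rintro ⟨H, hs, ht⟩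
  refine Subtype.ext (Subgraph.ext ?_ rfl)
  exact (Set.eq_univ_of_forall hs).symm

theorem det_lapMatrix_add_one {V R : Type*} [Fintype V] [DecidableEq V] [Nonempty V] [CommRing R]
    (G : SimpleGraph V) [DecidableRel G.Adj] :
    (G.lapMatrix R + Matrix.of fun _ _ => 1).det =
      (Fintype.card V) ^ 2 * (Nat.card {H : SimpleGraph V // H ≤ G ∧ H.IsTree} : R) := by
  obtain ⟨r⟩ := ‹Nonempty V›
  set x : V → ℤ := 1 - Pi.single r 1 with hx
  set C : Matrix V V ℤ := 1 + Matrix.vecMulVec x 1 with hC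
  have hCdet : C.det = Fintype.card V := by
    rw [hC, Matrix.vecMulVec_eq Unit, Matrix.det_one_add_replicateCol_mul_replicateRow]
    simp [hx, dotProduct_sub]
  have hCL : C * G.lapMatrix ℤ = G.lapMatrix ℤ := by
    have h : Matrix.vecMul (1 : V → ℤ) (G.lapMatrix ℤ) = 0 := by
      rw [← G.isSymm_lapMatrix (R := ℤ), Matrix.vecMul_transpose]
      exact G.lapMatrix_mulVec_const_eq_zero
    rw [hC, add_mul, one_mul, Matrix.vecMulVec_mul, h]
    simp
  have hLC : G.lapMatrix ℤ * C.transpose = G.lapMatrix ℤ := by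
    have h := congrArg Matrix.transpose hCL
    rwa [Matrix.transpose_mul, G.isSymm_lapMatrix (R := ℤ)] at h
  have hCr : C.mulVec (Pi.single r 1) = 1 := by
    rw [hC, Matrix.add_mulVec, Matrix.one_mulVec, Matrix.vecMulVec_mulVec]
    simp [hx]
  have hint : G.lapMatrix ℤ + Matrix.of (fun _ _ => 1) =
      C * (G.lapMatrix ℤ + Matrix.vecMulVec (Pi.single r 1) (Pi.single r 1)) * C.transpose := by
    rw [mul_add, add_mul, hCL, hLC, Matrix.mul_vecMulVec, Matrix.vecMulVec_mul,
      Matrix.vecMul_transpose, hCr]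
    congr 1
  have hdet := congrArg (Int.castRingHom R) (congrArg Matrix.det hint)
  rw [Matrix.det_mul, Matrix.det_mul, Matrix.det_transpose, hCdet, det_lapMatrix_add_single,
    RingHom.map_det] at hdet
  convert hdet using 2
  · ext i j
    by_cases hij : i = j <;> simp [lapMatrix, degMatrix, hij]
  · simp
    ring

end SimpleGraph

theorem Matrix.det_fromBlocks_diagonal {ι R : Type*} [Fintype ι] [DecidableEq ι] [CommRing R]
    (a b c d : ι → R) :
    (Matrix.fromBlocks (Matrix.diagonal a) (Matrix.diagonal b) (Matrix.diagonal c)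
      (Matrix.diagonal d)).det = ∏ i, (a i * d i - b i * c i) := by
  let σ : Fin 2 × ι ≃ ι ⊕ ι :=
    (finTwoEquiv.prodCongr (Equiv.refl ι)).trans (Equiv.boolProdEquivSum ι)
  rw [← Matrix.det_submatrix_equiv_self σ]
  have h : (Matrix.fromBlocks (Matrix.diagonal a) (Matrix.diagonal b) (Matrix.diagonal c)
      (Matrix.diagonal d)).submatrix σ σ =
      Matrix.blockDiagonal fun i => !![a i, b i; c i, d i] := by
    ext ⟨s, i⟩ ⟨t, j⟩
    by_cases hij : i = j <;> fin_cases s <;> fin_cases t <;>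
      simp [σ, Matrix.blockDiagonal_apply, Equiv.boolProdEquivSum, finTwoEquiv, hij]
  rw [h, Matrix.det_blockDiagonal]
  simp [Matrix.det_fin_two]

/-- The discrete Fourier matrix. -/
noncomputable def fourierMatrix (n : ℕ) [NeZero n] : Matrix (ZMod n) (ZMod n) ℂ :=
  Matrix.of fun i j => ZMod.stdAddChar (-(i * j))

theorem det_fourierMatrix_ne_zero (n : ℕ) [NeZero n] : (fourierMatrix n).det ≠ 0 := by
  have h : fourierMatrix n * Matrix.of (fun i j => ZMod.stdAddChar (i * j)) =
      Matrix.diagonal fun _ => (n : ℂ) := by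
    ext i j
    simp only [fourierMatrix, Matrix.mul_apply, Matrix.of_apply, Matrix.diagonal_apply,
      ← AddChar.map_add_eq_mul]
    have := AddChar.sum_mulShift (j - i) (ZMod.isPrimitive_stdAddChar n)
    rw [ZMod.card] at this
    rw [Finset.sum_congr rfl fun m _ => show ZMod.stdAddChar (-(i * m) + m * j) =
      (ZMod.stdAddChar (m * (j - i)) : ℂ) by ring_nf, this]
    simp [sub_eq_zero, eq_comm]
  intro h0
  have hdet := congrArg Matrix.det h
  rw [Matrix.det_mul, h0, zero_mul, Matrix.det_diagonal] at hdet
  simp only [Finset.prod_const] at hdet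
  exact pow_ne_zero _ (NeZero.ne (n : ℂ)) hdet.symm

theorem circulant_mul_fourierMatrix {n : ℕ} [NeZero n] (f : ZMod n → ℂ) :
    Matrix.circulant f * fourierMatrix n =
      fourierMatrix n * Matrix.diagonal fun j => ∑ m, f m * ZMod.stdAddChar (m * j) := by
  ext i j
  rw [Matrix.mul_diagonal, Matrix.mul_apply, Finset.mul_sum, ← (Equiv.subLeft i).sum_comp]
  refine Finset.sum_congr rfl fun m _ => ?_
  simp only [fourierMatrix, Matrix.circulant_apply, Matrix.of_apply, Equiv.subLeft_apply]
  rw [mul_left_comm, ← AddChar.map_add_eq_mul]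
  ring_nf

/-- The determinant of a two by two block matrix with circulant blocks. -/
theorem det_fromBlocks_circulant {n : ℕ} [NeZero n] (f g h p : ZMod n → ℂ) :
    (Matrix.fromBlocks (Matrix.circulant f) (Matrix.circulant g) (Matrix.circulant h)
      (Matrix.circulant p)).det =
      ∏ j, ((∑ m, f m * ZMod.stdAddChar (m * j)) * (∑ m, p m * ZMod.stdAddChar (m * j)) -
        (∑ m, g m * ZMod.stdAddChar (m * j)) * (∑ m, h m * ZMod.stdAddChar (m * j))) := by
  rw [← Matrix.det_fromBlocks_diagonal]
  have hF : (Matrix.fromBlocks (fourierMatrix n) 0 0 (fourierMatrix n)).det ≠ 0 := by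
    rw [Matrix.det_fromBlocks_zero₂₁]
    exact mul_ne_zero (det_fourierMatrix_ne_zero n) (det_fourierMatrix_ne_zero n)
  refine mul_right_cancel₀ hF ?_
  rw [mul_comm (Matrix.det (Matrix.fromBlocks (Matrix.diagonal _) _ _ _)), ← Matrix.det_mul,
    ← Matrix.det_mul, Matrix.fromBlocks_multiply, Matrix.fromBlocks_multiply]
  simp [circulant_mul_fourierMatrix]

theorem ZMod.natCast_ne_neg_of_two_mul_lt {n m : ℕ} (hm : 1 ≤ m) (hmn : 2 * m < n) :
    (m : ZMod n) ≠ -(m : ZMod n) := by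
  intro h
  have h0 : ((2 * m : ℕ) : ZMod n) = 0 := by
    push_cast
    linear_combination h
  rw [ZMod.natCast_eq_zero_iff] at h0
  exact absurd (Nat.le_of_dvd (by omega) h0) (by omega)

theorem ZMod.natCast_ne_zero_of_two_mul_lt {n m : ℕ} (hm : 1 ≤ m) (hmn : 2 * m < n) :
    (m : ZMod n) ≠ 0 := fun h =>
  ZMod.natCast_ne_neg_of_two_mul_lt hm hmn (by rw [h, neg_zero])

/-- First row of the diagonal block with step `m` of the adjacency matrix of an I-graph. -/
def stepVec (n m : ℕ) : ZMod n → ℂ :=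
  Pi.single (m : ZMod n) 1 + Pi.single (-(m : ZMod n)) 1

theorem adjMatrix_IGraph {n k l : ℕ} (hk : 1 ≤ k) (hkl : k ≤ l) (hn : 2 * l < n) :
    (IGraph n k l).adjMatrix ℂ =
      Matrix.fromBlocks (Matrix.circulant (stepVec n l)) (Matrix.circulant (Pi.single 0 1))
        (Matrix.circulant (Pi.single 0 1)) (Matrix.circulant (stepVec n k)) := by
  have hstep : ∀ m : ℕ, 1 ≤ m → 2 * m < n → ∀ i j : ZMod n,
      (if i ≠ j ∧ (j = i + m ∨ i = j + m) then (1 : ℂ) else 0) = stepVec n m (i - j) := by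
    intro m hm hmn i j
    have h0 := ZMod.natCast_ne_zero_of_two_mul_lt hm hmn
    have h1 := ZMod.natCast_ne_neg_of_two_mul_lt hm hmn
    simp only [stepVec, Pi.add_apply, Pi.single_apply]
    have e1 : i - j = m ↔ i = j + m := sub_eq_iff_eq_add'
    have e2 : i - j = -m ↔ j = i + m :=
      ⟨fun h => by linear_combination -h, fun h => by linear_combination -h⟩
    have e3 : i = j ↔ i - j = 0 := sub_eq_zero.symm
    simp only [← e1, ← e2, Ne, e3]
    generalize i - j = x
    grind
  ext (i | i) (j | j)
  · rw [Matrix.fromBlocks_apply₁₁, Matrix.circulant_apply, ← hstep l (by omega) hn,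
      SimpleGraph.adjMatrix_apply]
    simp [IGraph, IRel]
  · rw [SimpleGraph.adjMatrix_apply]
    simp [IGraph, IRel, Matrix.one_apply]
  · rw [SimpleGraph.adjMatrix_apply]
    simp [IGraph, IRel, Matrix.one_apply, eq_comm]
  · rw [Matrix.fromBlocks_apply₂₂, Matrix.circulant_apply, ← hstep k hk (by omega),
      SimpleGraph.adjMatrix_apply]
    simp [IGraph, IRel]

theorem degree_IGraph {n k l : ℕ} [NeZero n] (hk : 1 ≤ k) (hkl : k ≤ l) (hn : 2 * l < n)
    (v : ZMod n ⊕ ZMod n) : ((IGraph n k l).degree v : ℂ) = 3 := by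
  have hstep : ∀ (m : ℕ) (i : ZMod n), ∑ j, stepVec n m (i - j) = 2 := by
    intro m i
    refine ((Equiv.subLeft i).sum_comp (stepVec n m)).trans ?_
    simp only [stepVec, Pi.add_apply, Finset.sum_add_distrib, Fintype.sum_pi_single']
    norm_num
  have h : ((IGraph n k l).degree v : ℂ) = ∑ w, (IGraph n k l).adjMatrix ℂ v w := by
    simp [SimpleGraph.degree_eq_sum_if_adj, SimpleGraph.adjMatrix_apply]
  rw [h, adjMatrix_IGraph hk hkl hn, Fintype.sum_sum_type]
  obtain i | i := v <;> simp [hstep, Matrix.one_apply] <;> norm_num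

theorem lapMatrix_IGraph_add_one {n k l : ℕ} [NeZero n] (hk : 1 ≤ k) (hkl : k ≤ l)
    (hn : 2 * l < n) :
    (IGraph n k l).lapMatrix ℂ + Matrix.of (fun _ _ => 1) =
      Matrix.fromBlocks (Matrix.circulant fun x => 3 * (Pi.single 0 1 : ZMod n → ℂ) x - stepVec n l x + 1)
        (Matrix.circulant fun x => 1 - (Pi.single 0 1 : ZMod n → ℂ) x)
        (Matrix.circulant fun x => 1 - (Pi.single 0 1 : ZMod n → ℂ) x)
        (Matrix.circulant fun x => 3 * (Pi.single 0 1 : ZMod n → ℂ) x - stepVec n k x + 1) := by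
  rw [SimpleGraph.lapMatrix, adjMatrix_IGraph hk hkl hn]
  ext (i | i) (j | j) <;>
    simp [SimpleGraph.degMatrix, Matrix.diagonal_apply, Matrix.one_apply,
      degree_IGraph hk hkl hn, Pi.single_apply, sub_eq_zero]
  all_goals ring

theorem det_lapMatrix_IGraph_add_one {n k l : ℕ} [NeZero n] (hk : 1 ≤ k) (hkl : k ≤ l)
    (hn : 2 * l < n) :
    ((IGraph n k l).lapMatrix ℂ + Matrix.of (fun _ _ => 1)).det =
      4 * n * ∏ j ∈ Finset.univ.erase (0 : ZMod n),
        ((3 - (ZMod.stdAddChar ((l : ZMod n) * j) + ZMod.stdAddChar (-((l : ZMod n) * j)))) *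
          (3 - (ZMod.stdAddChar ((k : ZMod n) * j) + ZMod.stdAddChar (-((k : ZMod n) * j)))) - 1) := by
  have hsingle : ∀ a j : ZMod n, ∑ m, (Pi.single a 1 : ZMod n → ℂ) m * ZMod.stdAddChar (m * j) =
      ZMod.stdAddChar (a * j) := by
    intro a j
    simp [Pi.single_apply]
  have hone : ∀ j : ZMod n, ∑ m : ZMod n, (ZMod.stdAddChar (m * j) : ℂ) =
      if j = 0 then (n : ℂ) else 0 := by
    intro j
    rw [AddChar.sum_mulShift j (ZMod.isPrimitive_stdAddChar n), ZMod.card]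
    split_ifs <;> simp
  have hf : ∀ (m : ℕ) (j : ZMod n),
      ∑ x, (3 * (Pi.single 0 1 : ZMod n → ℂ) x - stepVec n m x + 1) * ZMod.stdAddChar (x * j) =
        3 - (ZMod.stdAddChar ((m : ZMod n) * j) + ZMod.stdAddChar (-((m : ZMod n) * j))) +
          if j = 0 then (n : ℂ) else 0 := by
    intro m j
    simp only [stepVec, Pi.add_apply, add_mul, sub_mul, one_mul, mul_assoc, Finset.sum_add_distrib,
      Finset.sum_sub_distrib, ← Finset.mul_sum, hsingle, hone]
    simp
  have hg : ∀ j : ZMod n,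
      ∑ x, (1 - (Pi.single 0 1 : ZMod n → ℂ) x) * ZMod.stdAddChar (x * j) =
        (if j = 0 then (n : ℂ) else 0) - 1 := by
    intro j
    simp only [sub_mul, one_mul, Finset.sum_sub_distrib, hsingle, hone]
    simp
  rw [lapMatrix_IGraph_add_one hk hkl hn, det_fromBlocks_circulant,
    ← Finset.mul_prod_erase _ _ (Finset.mem_univ (0 : ZMod n))]
  simp only [hf, hg]
  congr 1
  · simp
    ring
  · refine Finset.prod_congr rfl fun j hj => ?_
    rw [if_neg (Finset.ne_of_mem_erase hj)]
    ring

/-- The spectral formula for the number of spanning trees of an I-graph. -/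
theorem natCast_mul_tauI {n k l : ℕ} [NeZero n] (hk : 1 ≤ k) (hkl : k ≤ l) (hn : 2 * l < n) :
    (n : ℂ) * tauI n k l = ∏ j ∈ Finset.univ.erase (0 : ZMod n),
      ((3 - (ZMod.stdAddChar ((l : ZMod n) * j) + ZMod.stdAddChar (-((l : ZMod n) * j)))) *
        (3 - (ZMod.stdAddChar ((k : ZMod n) * j) + ZMod.stdAddChar (-((k : ZMod n) * j)))) - 1) := by
  have h := (IGraph n k l).det_lapMatrix_add_one (R := ℂ)
  rw [det_lapMatrix_IGraph_add_one hk hkl hn, ← SimpleGraph.card_spanning_isTree] at h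
  change _ = _ * (tauI n k l : ℂ) at h
  rw [Fintype.card_sum, ZMod.card] at h
  push_cast at h
  have hn0 : (n : ℂ) ≠ 0 := NeZero.ne _
  refine mul_left_cancel₀ (mul_ne_zero (OfNat.ofNat_ne_zero 4) hn0) ?_
  rw [h]
  ring

theorem Polynomial.Chebyshev.T_eval_add_inv_div_two {z : ℂ} (hz : z ≠ 0) (m : ℕ) :
    (Chebyshev.T ℂ m).eval ((z + z⁻¹) / 2) = (z ^ m + (z⁻¹) ^ m) / 2 := by
  induction m using Nat.twoStepInduction with
  | zero => simp
  | one => simp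
  | more m h₀ h₁ =>
    push_cast at h₁ ⊢
    rw [Chebyshev.T_add_two]
    simp only [eval_sub, eval_mul, eval_ofNat, eval_X, h₀, h₁]
    have h : z * z⁻¹ = 1 := mul_inv_cancel₀ hz
    generalize z⁻¹ = y at h
    linear_combination (z ^ m + y ^ m) / 2 * h

theorem exists_eq_add_inv_div_two (w : ℂ) : ∃ z : ℂ, z ≠ 0 ∧ w = (z + z⁻¹) / 2 := by
  obtain ⟨θ, rfl⟩ := Complex.cos_surjective w
  refine ⟨Complex.exp (θ * Complex.I), Complex.exp_ne_zero _, ?_⟩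
  rw [← Complex.exp_neg, Complex.cos, neg_mul]

theorem prod_X_sub_C_stdAddChar (n : ℕ) [NeZero n] :
    ∏ j : ZMod n, (X - C (ZMod.stdAddChar j : ℂ)) = X ^ n - 1 := by
  have hpos : 0 < n := Nat.pos_of_ne_zero (NeZero.ne n)
  rw [X_pow_sub_one_eq_prod hpos (Complex.isPrimitiveRoot_exp n (NeZero.ne n))]
  have himage : Polynomial.nthRootsFinset n (1 : ℂ) =
      Finset.univ.image (ZMod.stdAddChar : ZMod n → ℂ) := by
    symm
    refine Finset.eq_of_subset_of_card_le ?_ ?_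
    · intro x hx
      obtain ⟨j, -, rfl⟩ := Finset.mem_image.1 hx
      rw [mem_nthRootsFinset hpos, ← AddChar.map_nsmul_eq_pow]
      simp
    · rw [Finset.card_image_of_injective _ ZMod.injective_stdAddChar,
        (Complex.isPrimitiveRoot_exp n (NeZero.ne n)).card_nthRootsFinset]
      simp
  rw [himage, Finset.prod_image fun x _ y _ h => ZMod.injective_stdAddChar h]

theorem prod_sub_stdAddChar (n : ℕ) [NeZero n] (z : ℂ) :
    ∏ j : ZMod n, (z - ZMod.stdAddChar j) = z ^ n - 1 := by
  simpa [eval_prod] using congrArg (eval z) (prod_X_sub_C_stdAddChar n)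

theorem prod_erase_one_sub_stdAddChar (n : ℕ) [NeZero n] :
    ∏ j ∈ Finset.univ.erase (0 : ZMod n), (1 - ZMod.stdAddChar j : ℂ) = n := by
  have h := prod_X_sub_C_stdAddChar n
  rw [← Finset.mul_prod_erase _ _ (Finset.mem_univ (0 : ZMod n)), ← mul_geom_sum] at h
  simp only [AddChar.map_zero_eq_one, C_1] at h
  have h' := mul_left_cancel₀ (X_sub_C_ne_zero (1 : ℂ)) h
  simpa [eval_prod, eval_finsetSum] using congrArg (eval 1) h'

/-- The cosine `cos (2πj/n)`, as a complex number. -/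
noncomputable def cosZMod {n : ℕ} [NeZero n] (j : ZMod n) : ℂ :=
  (ZMod.stdAddChar j + ZMod.stdAddChar (-j)) / 2

theorem T_eval_cosZMod {n : ℕ} [NeZero n] (m : ℕ) (j : ZMod n) :
    2 * (Chebyshev.T ℂ m).eval (cosZMod j) =
      ZMod.stdAddChar ((m : ZMod n) * j) + ZMod.stdAddChar (-((m : ZMod n) * j)) := by
  have hz : (ZMod.stdAddChar j : ℂ) ≠ 0 := (ZMod.stdAddChar.val_isUnit j).ne_zero
  rw [cosZMod, AddChar.map_neg_eq_inv, Chebyshev.T_eval_add_inv_div_two hz,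
    AddChar.map_neg_eq_inv, ← nsmul_eq_mul, AddChar.map_nsmul_eq_pow, inv_pow]
  ring

theorem prod_two_mul_sub_cosZMod (n : ℕ) [NeZero n] (w : ℂ) :
    ∏ j : ZMod n, 2 * (w - cosZMod j) = 2 * ((Chebyshev.T ℂ n).eval w - 1) := by
  obtain ⟨z, hz, rfl⟩ := exists_eq_add_inv_div_two w
  have hfactor : ∀ j : ZMod n, 2 * ((z + z⁻¹) / 2 - cosZMod j) =
      z⁻¹ * ((z - ZMod.stdAddChar j) * (z - ZMod.stdAddChar (-j))) := by
    intro j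
    have hj : (ZMod.stdAddChar j : ℂ) ≠ 0 := (ZMod.stdAddChar.val_isUnit j).ne_zero
    rw [cosZMod, AddChar.map_neg_eq_inv]
    field_simp
    ring
  have hneg : ∏ j : ZMod n, (z - ZMod.stdAddChar (-j)) = ∏ j : ZMod n, (z - ZMod.stdAddChar j) :=
    Equiv.prod_comp (Equiv.neg (ZMod n)) fun j => z - ZMod.stdAddChar j
  rw [Finset.prod_congr rfl fun j _ => hfactor j, Finset.prod_mul_distrib,
    Finset.prod_mul_distrib, hneg, prod_sub_stdAddChar, Chebyshev.T_eval_add_inv_div_two hz]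
  simp only [Finset.prod_const, Finset.card_univ, ZMod.card]
  have h : z ^ n * z⁻¹ ^ n = 1 := by rw [← mul_pow, mul_inv_cancel₀ hz, one_pow]
  linear_combination (z ^ n - 2) * h

theorem prod_erase_cosZMod_sub {n : ℕ} [NeZero n] {w : ℂ} (hw : w ≠ 1) :
    ∏ j ∈ Finset.univ.erase (0 : ZMod n), (cosZMod j - w) =
      (-1 / 2) ^ (n - 1) * (((Chebyshev.T ℂ n).eval w - 1) / (w - 1)) := by
  have h := prod_two_mul_sub_cosZMod n w
  rw [← Finset.mul_prod_erase _ _ (Finset.mem_univ (0 : ZMod n))] at h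
  have h0 : cosZMod (0 : ZMod n) = 1 := by simp [cosZMod]
  have hw' : w - 1 ≠ 0 := sub_ne_zero.2 hw
  rw [h0, mul_assoc] at h
  rw [← mul_left_cancel₀ two_ne_zero h, mul_div_cancel_left₀ _ hw']
  have hcard : (Finset.univ.erase (0 : ZMod n)).card = n - 1 := by
    rw [Finset.card_erase_of_mem (Finset.mem_univ _), Finset.card_univ, ZMod.card]
  rw [← hcard, ← Finset.prod_const, ← Finset.prod_mul_distrib]
  refine Finset.prod_congr rfl fun j _ => ?_
  ring

theorem prod_erase_cosZMod_sub_one (n : ℕ) [NeZero n] :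
    ∏ j ∈ Finset.univ.erase (0 : ZMod n), (cosZMod j - 1) = (-1 / 2) ^ (n - 1) * (n : ℂ) ^ 2 := by
  have hneg : ∏ j ∈ Finset.univ.erase (0 : ZMod n), (1 - ZMod.stdAddChar (-j) : ℂ) = n := by
    rw [← prod_erase_one_sub_stdAddChar n]
    exact Finset.prod_equiv (Equiv.neg _) (by simp) (by simp)
  have hcard : (Finset.univ.erase (0 : ZMod n)).card = n - 1 := by
    rw [Finset.card_erase_of_mem (Finset.mem_univ _), Finset.card_univ, ZMod.card]
  rw [sq]
  nth_rewrite 1 [← hneg]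
  rw [← prod_erase_one_sub_stdAddChar n, ← hcard, ← Finset.prod_const, ← Finset.prod_mul_distrib,
    ← Finset.prod_mul_distrib]
  refine Finset.prod_congr rfl fun j _ => ?_
  have hj : (ZMod.stdAddChar j : ℂ) ≠ 0 := (ZMod.stdAddChar.val_isUnit j).ne_zero
  rw [cosZMod, AddChar.map_neg_eq_inv]
  field_simp
  ring

theorem leadingCoeff_three_sub_two_mul_T {m : ℕ} (hm : 1 ≤ m) :
    (3 - 2 * Chebyshev.T ℂ m).leadingCoeff = -2 ^ m ∧
      (3 - 2 * Chebyshev.T ℂ m).natDegree = m := by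
  have hdeg : (2 * Chebyshev.T ℂ m).degree = m := by
    rw [← C_ofNat, degree_C_mul two_ne_zero, Chebyshev.degree_T]
    simp
  have hlt : (3 : ℂ[X]).degree < (2 * Chebyshev.T ℂ m).degree := by
    rw [hdeg, ← C_ofNat]
    exact degree_C_le.trans_lt (by exact_mod_cast hm)
  refine ⟨?_, natDegree_eq_of_degree_eq_some ?_⟩
  · rw [leadingCoeff_sub_of_degree_lt' hlt, ← C_ofNat, leadingCoeff_mul, leadingCoeff_C,
      Chebyshev.leadingCoeff_T]
    obtain ⟨m, rfl⟩ := Nat.exists_eq_add_of_le' hm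
    rw [Int.natAbs_natCast, Nat.add_sub_cancel, pow_succ']
  · rw [degree_sub_eq_right_of_degree_lt hlt, hdeg]

section

variable {k l : ℕ} {Q : ℂ[X]}

theorem leadingCoeff_of_X_sub_one_mul_eq (hk : 1 ≤ k) (hl : 1 ≤ l)
    (hQ : (X - 1) * Q = (3 - 2 * Chebyshev.T ℂ k) * (3 - 2 * Chebyshev.T ℂ l) - 1) :
    Q.leadingCoeff = 2 ^ (k + l) := by
  obtain ⟨hck, hdk⟩ := leadingCoeff_three_sub_two_mul_T hk
  obtain ⟨hcl, hdl⟩ := leadingCoeff_three_sub_two_mul_T hl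
  have hc := congrArg leadingCoeff hQ
  have hlt : (1 : ℂ[X]).natDegree <
      ((3 - 2 * Chebyshev.T ℂ k) * (3 - 2 * Chebyshev.T ℂ l)).natDegree := by
    rw [natDegree_mul, hdk, hdl, natDegree_one]
    · omega
    · rw [← leadingCoeff_ne_zero, hck]
      simp
    · rw [← leadingCoeff_ne_zero, hcl]
      simp
  rw [leadingCoeff_mul, leadingCoeff_sub_of_degree_lt (degree_lt_degree hlt), leadingCoeff_mul,
    hck, hcl, ← C_1, leadingCoeff_X_sub_C, one_mul] at hc
  rw [hc, pow_add]
  ring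

theorem eval_one_ne_zero_of_X_sub_one_mul_eq (hk : 1 ≤ k)
    (hQ : (X - 1) * Q = (3 - 2 * Chebyshev.T ℂ k) * (3 - 2 * Chebyshev.T ℂ l) - 1) :
    Q.eval 1 ≠ 0 := by
  have h := congrArg (fun p => eval 1 (derivative p)) hQ
  simp [derivative_mul, Chebyshev.derivative_T_eval_one] at h
  rw [h]
  intro h0
  have h1 : ((2 * k ^ 2 + 2 * l ^ 2 : ℕ) : ℂ) = 0 := by
    push_cast
    linear_combination -h0
  have h2 : 2 * k ^ 2 + 2 * l ^ 2 = 0 := by exact_mod_cast h1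
  have h3 : 0 < k ^ 2 := by positivity
  omega

theorem prod_erase_eval_cosZMod {n : ℕ} [NeZero n] (h1 : Q.eval 1 ≠ 0) :
    ∏ j ∈ Finset.univ.erase (0 : ZMod n), Q.eval (cosZMod j) =
      Q.leadingCoeff ^ (n - 1) * ((-1 / 2) ^ (n - 1)) ^ Q.natDegree *
        (Q.roots.map fun w => ((Chebyshev.T ℂ n).eval w - 1) / (w - 1)).prod := by
  have hcard : (Finset.univ.erase (0 : ZMod n)).card = n - 1 := by
    rw [Finset.card_erase_of_mem (Finset.mem_univ _), Finset.card_univ, ZMod.card]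
  have hroot : ∀ w ∈ Q.roots, ∏ j ∈ Finset.univ.erase (0 : ZMod n), (cosZMod j - w) =
      (-1 / 2) ^ (n - 1) * (((Chebyshev.T ℂ n).eval w - 1) / (w - 1)) := by
    intro w hw
    refine prod_erase_cosZMod_sub ?_
    rintro rfl
    exact h1 (isRoot_of_mem_roots hw)
  rw [Finset.prod_congr rfl fun j _ => (IsAlgClosed.splits Q).eval_eq_prod_roots (cosZMod j),
    Finset.prod_mul_distrib, Finset.prod_const, hcard, ← Multiset.prod_map_prod,
    Multiset.map_congr rfl hroot, Multiset.prod_map_mul, Multiset.map_const',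
    Multiset.prod_replicate, IsAlgClosed.card_roots_eq_natDegree]
  ring

end

open Polynomial Polynomial.Chebyshev in
/-- The number of spanning trees of the I-graph `I(n,k,l)`, where `gcd(k,l) = 1`:
`τ(n) = (-1)^((n-1)(k+l)) · n · ∏_w (T_n(w) - 1)/(w - 1)`, the product being over the
roots `w` (with multiplicity) of the degree-`k+l-1` polynomial `Q` with
`(X-1)·Q(X) = (3 - 2T_k(X))(3 - 2T_l(X)) - 1`. -/
theorem tau_IGraph_formula (n k l : ℕ)
    (hk : 1 ≤ k) (hkl : k ≤ l) (hn : 2 * l < n) (hcop : Nat.gcd k l = 1)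
    (Q : Polynomial ℂ) (hQdeg : Q.degree = (k + l - 1 : ℕ))
    (hQ : (X - 1) * Q = (3 - 2 * T ℂ k) * (3 - 2 * T ℂ l) - 1) :
    (tauI n k l : ℂ) = (-1) ^ ((n - 1) * (k + l)) * n *
      (Q.roots.map (fun w => ((T ℂ n).eval w - 1) / (w - 1))).prod := by
  have : NeZero n := ⟨by omega⟩
  have hn0 : (n : ℂ) ≠ 0 := NeZero.ne _
  have hfactor : ∀ j : ZMod n,
      (3 - (ZMod.stdAddChar ((l : ZMod n) * j) + ZMod.stdAddChar (-((l : ZMod n) * j)))) *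
        (3 - (ZMod.stdAddChar ((k : ZMod n) * j) + ZMod.stdAddChar (-((k : ZMod n) * j)))) - 1 =
        (cosZMod j - 1) * Q.eval (cosZMod j) := by
    intro j
    have h := congrArg (eval (cosZMod j)) hQ
    simp only [eval_mul, eval_sub, eval_X, eval_one, eval_ofNat, T_eval_cosZMod] at h
    rw [h]
    ring
  refine mul_left_cancel₀ hn0 ?_
  rw [natCast_mul_tauI hk hkl hn, Finset.prod_congr rfl fun j _ => hfactor j,
    Finset.prod_mul_distrib, prod_erase_cosZMod_sub_one,
    prod_erase_eval_cosZMod (eval_one_ne_zero_of_X_sub_one_mul_eq hk hQ),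
    leadingCoeff_of_X_sub_one_mul_eq hk (hk.trans hkl) hQ,
    natDegree_eq_of_degree_eq_some hQdeg]
  have hpow : ((-1 / 2 : ℂ) ^ (n - 1)) * ((2 ^ (k + l)) ^ (n - 1) *
      ((-1 / 2) ^ (n - 1)) ^ (k + l - 1)) = (-1) ^ ((n - 1) * (k + l)) := by
    rw [mul_left_comm, ← pow_succ', Nat.sub_add_cancel (by omega), ← pow_mul, ← pow_mul,
      mul_comm (k + l) (n - 1), ← mul_pow]
    norm_num
  rw [← hpow]
  ring
end

section
/- Let n, k, l be integers with 1 ≤ k ≤ l, 2l < n and gcd(k,l) = 1. Then the Jacobian group Jac(I(n,k,l)) can be generated by at most 2k + 2l − 1 elements: there exists a finite subset S of Jac(I(n,k,l)) with |S| ≤ 2k + 2l − 1 whose ℤ-span is the whole group. -/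
open Polynomial

/-- A subgroup of an abelian group that is contained in the subgroup generated by `m` elements
can itself be generated by at most `m` elements. -/
theorem AddSubgroup.exists_finset_card_le_closure_eq_top {C : Type*} [AddCommGroup C] {m : ℕ}
    (w : Fin m → C) (T : AddSubgroup C)
    (hT : ∀ x ∈ T, x ∈ Submodule.span ℤ (Set.range w)) :
    ∃ S : Finset T, S.card ≤ m ∧ AddSubgroup.closure (S : Set T) = ⊤ := by
  classical
  set f : (Fin m → ℤ) →ₗ[ℤ] C := Fintype.linearCombination ℤ w with hf
  set N : Submodule ℤ (Fin m → ℤ) := (AddSubgroup.toIntSubmodule T).comap f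
  obtain ⟨r, snf⟩ := Submodule.smithNormalForm (Pi.basisFun ℤ (Fin m)) N
  have hr : r ≤ m := by simpa using Fintype.card_le_of_embedding snf.f
  let g : N →ₗ[ℤ] T :=
    f.restrict (p := N) (q := AddSubgroup.toIntSubmodule T) fun x hx => hx
  have hg : Function.Surjective g := by
    rintro ⟨x, hx⟩
    have hx' := hT x hx
    rw [← Fintype.range_linearCombination] at hx'
    obtain ⟨c, hc⟩ := hx'
    refine ⟨⟨c, ?_⟩, Subtype.ext hc⟩
    change f c ∈ T
    rwa [hf, hc]
  refine ⟨Finset.univ.image (g ∘ snf.bN), ?_, ?_⟩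
  · exact Finset.card_image_le.trans (by simpa using hr)
  · have hspan : Submodule.span ℤ (Set.range (g ∘ snf.bN)) = ⊤ := by
      rw [Set.range_comp, ← Submodule.map_span, snf.bN.span_eq, Submodule.map_top,
        LinearMap.range_eq_top.2 hg]
    rw [Finset.coe_image, Finset.coe_univ, Set.image_univ,
      ← Submodule.span_int_eq_addSubgroupClosure, hspan]
    rfl

theorem SimpleGraph.lapMatrix_mulVec_single {V R : Type*} [Fintype V] [DecidableEq V]
    (G : SimpleGraph V) [DecidableRel G.Adj] [Ring R] (x : V) :
    (G.lapMatrix R).mulVec (Pi.single x 1) =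
      (G.degree x : R) • Pi.single x 1 - ∑ y ∈ G.neighborFinset x, Pi.single y 1 := by
  ext w
  rw [Matrix.mulVec_single_one]
  by_cases h : w = x
  · subst h
    simp [SimpleGraph.lapMatrix, SimpleGraph.degMatrix, Finset.sum_apply, Pi.single_apply]
  · simp [SimpleGraph.lapMatrix, SimpleGraph.degMatrix, Finset.sum_apply, Pi.single_apply, h,
      SimpleGraph.adj_comm]

theorem SimpleGraph.sum_lapMatrix_mulVec {V R : Type*} [Fintype V] [DecidableEq V]
    (G : SimpleGraph V) [DecidableRel G.Adj] [CommRing R] (v : V → R) :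
    ∑ x, (G.lapMatrix R).mulVec v x = 0 := by
  have h : (1 : V → R) ⬝ᵥ (G.lapMatrix R).mulVec v = 0 := by
    rw [Matrix.dotProduct_mulVec, ← Matrix.mulVec_transpose, (G.isSymm_lapMatrix (R := R)).eq]
    have := G.lapMatrix_mulVec_const_eq_zero (R := R)
    simp only [Pi.one_def, this, zero_dotProduct]
  simpa [dotProduct] using h

theorem ZMod.natCast_ne_neg_natCast {n a : ℕ} (ha : 1 ≤ a) (han : 2 * a < n) :
    (a : ZMod n) ≠ -a := by
  intro h
  have : ((2 * a : ℕ) : ZMod n) = 0 := by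
    push_cast
    linear_combination h
  rw [ZMod.natCast_eq_zero_iff] at this
  exact absurd (Nat.le_of_dvd (by omega) this) (by omega)

theorem ZMod.natCast_ne_zero_of_lt_s14 {n a : ℕ} (ha : 1 ≤ a) (han : a < n) :
    (a : ZMod n) ≠ 0 := by
  rw [Ne, ZMod.natCast_eq_zero_iff]
  exact fun h => absurd (Nat.le_of_dvd (by omega) h) (by omega)

theorem IGraph_neighborFinset_inl {n k l : ℕ} [NeZero n] (hl : 1 ≤ l) (hn : 2 * l < n)
    (i : ZMod n) :
    (IGraph n k l).neighborFinset (.inl i) = {.inl (i + l), .inl (i - l), .inr i} := by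
  have h0 := ZMod.natCast_ne_zero_of_lt_s14 hl (by omega : l < n)
  ext w
  rw [SimpleGraph.mem_neighborFinset, IGraph, SimpleGraph.fromRel_adj]
  rcases w with j | j
  · simp only [IRel, ne_eq, Sum.inl.injEq, Finset.mem_insert, Finset.mem_singleton, reduceCtorEq,
      or_false]
    grind
  · simp [IRel, eq_comm]

theorem IGraph_neighborFinset_inr {n k l : ℕ} [NeZero n] (hk : 1 ≤ k) (hn : 2 * k < n)
    (i : ZMod n) :
    (IGraph n k l).neighborFinset (.inr i) = {.inr (i + k), .inr (i - k), .inl i} := by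
  have h0 := ZMod.natCast_ne_zero_of_lt_s14 hk (by omega : k < n)
  ext w
  rw [SimpleGraph.mem_neighborFinset, IGraph, SimpleGraph.fromRel_adj]
  rcases w with j | j
  · simp [IRel]
  · simp only [IRel, ne_eq, Sum.inr.injEq, Finset.mem_insert, Finset.mem_singleton, reduceCtorEq,
      or_false]
    grind

theorem lapI_mulVec_single_inl {n k l : ℕ} [NeZero n] (hl : 1 ≤ l) (hn : 2 * l < n)
    (i : ZMod n) :
    (lapI n k l ℤ).mulVec (Pi.single (.inl i) 1) =
      (3 : ℤ) • Pi.single (.inl i) 1 - (Pi.single (.inl (i + l)) 1 + (Pi.single (.inl (i - l)) 1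
        + Pi.single (.inr i) 1)) := by
  have hne : i + (l : ZMod n) ≠ i - l := by
    rw [sub_eq_add_neg]
    exact fun h => ZMod.natCast_ne_neg_natCast hl hn (add_left_cancel h)
  rw [lapI, SimpleGraph.lapMatrix_mulVec_single, ← SimpleGraph.card_neighborFinset_eq_degree,
    IGraph_neighborFinset_inl hl hn, Finset.sum_insert (by simpa using hne),
    Finset.sum_pair (by simp), Finset.card_insert_of_notMem (by simpa using hne),
    Finset.card_pair (by simp)]
  rfl

theorem lapI_mulVec_single_inr {n k l : ℕ} [NeZero n] (hk : 1 ≤ k) (hn : 2 * k < n)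
    (i : ZMod n) :
    (lapI n k l ℤ).mulVec (Pi.single (.inr i) 1) =
      (3 : ℤ) • Pi.single (.inr i) 1 - (Pi.single (.inr (i + k)) 1 + (Pi.single (.inr (i - k)) 1
        + Pi.single (.inl i) 1)) := by
  have hne : i + (k : ZMod n) ≠ i - k := by
    rw [sub_eq_add_neg]
    exact fun h => ZMod.natCast_ne_neg_natCast hk hn (add_left_cancel h)
  rw [lapI, SimpleGraph.lapMatrix_mulVec_single, ← SimpleGraph.card_neighborFinset_eq_degree,
    IGraph_neighborFinset_inr hk hn, Finset.sum_insert (by simpa using hne),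
    Finset.sum_pair (by simp), Finset.card_insert_of_notMem (by simpa using hne),
    Finset.card_pair (by simp)]
  rfl

/-- If functions `u`, `v` on `ZMod n` are harmonic for the I-graph and `u` is constant on
`2k + 2l` consecutive residues, then both are constant with the same value. -/
theorem IGraph_harmonic_eq_const {n k l : ℕ} [NeZero n] {Q : Type*} [AddCommGroup Q]
    (hk : 1 ≤ k) (hl : 1 ≤ l) (u v : ZMod n → Q)
    (hu : ∀ i, (3 : ℤ) • u i - (u (i + l) + (u (i - l) + v i)) = 0)
    (hv : ∀ i, (3 : ℤ) • v i - (v (i + k) + (v (i - k) + u i)) = 0) (a : Q)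
    (hwin : ∀ j : ℕ, j < 2 * k + 2 * l → u (j : ZMod n) = a) :
    (∀ i, u i = a) ∧ ∀ i, v i = a := by
  have hv' : ∀ i, v i = (3 : ℤ) • u i - u (i + l) - u (i - l) := fun i => by
    rw [← sub_eq_zero, ← neg_eq_zero, ← hu i]
    abel
  have hall : ∀ j : ℕ, u (j : ZMod n) = a := by
    intro j
    induction j using Nat.strong_induction_on with
    | _ j ih =>
    rcases lt_or_ge j (2 * k + 2 * l) with hj | hj
    · exact hwin j hj
    obtain ⟨p, rfl⟩ := Nat.exists_eq_add_of_le hj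
    have hrec := hv ((p + k + l : ℕ) : ZMod n)
    have e : ∀ (x : ZMod n) (q : ℕ), q < 2 * k + 2 * l + p → (q : ZMod n) = x → u x = a := by
      rintro x q hq rfl
      exact ih q hq
    rw [hv', hv', hv',
      e ((p + k + l : ℕ) : ZMod n) (p + k + l) (by omega) rfl,
      e (((p + k + l : ℕ) : ZMod n) + l) (p + k + 2 * l) (by omega) (by push_cast; ring),
      e (((p + k + l : ℕ) : ZMod n) - l) (p + k) (by omega) (by push_cast; ring),
      e (((p + k + l : ℕ) : ZMod n) + k) (p + 2 * k + l) (by omega) (by push_cast; ring),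
      e (((p + k + l : ℕ) : ZMod n) - k) (p + l) (by omega) (by push_cast; ring),
      e (((p + k + l : ℕ) : ZMod n) + k - l) (p + 2 * k) (by omega) (by push_cast; ring),
      e (((p + k + l : ℕ) : ZMod n) - k + l) (p + 2 * l) (by omega) (by push_cast; ring),
      e (((p + k + l : ℕ) : ZMod n) - k - l) p (by omega) (by push_cast; ring),
      show ((p + k + l : ℕ) : ZMod n) + k + l = ((2 * k + 2 * l + p : ℕ) : ZMod n) by
        push_cast; ring] at hrec
    rw [← sub_eq_zero, ← hrec]
    abel
  have huall : ∀ i, u i = a := fun i => by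
    rw [← ZMod.natCast_zmod_val i]
    exact hall _
  refine ⟨huall, fun i => ?_⟩
  rw [hv', huall, huall, huall]
  abel

/-- The sum of the coordinates, as a linear map on the cokernel of the Laplacian. -/
noncomputable def cokerDegree (n k l : ℕ) [NeZero n] : cokerM (lapI n k l ℤ) →ₗ[ℤ] ℤ :=
  (LinearMap.range (lapI n k l ℤ).mulVecLin).liftQ (∑ x, LinearMap.proj x) <| by
    rintro _ ⟨v, rfl⟩
    simpa [lapI] using (IGraph n k l).sum_lapMatrix_mulVec v

theorem cokerDegree_mk {n k l : ℕ} [NeZero n] (v : ZMod n ⊕ ZMod n → ℤ) :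
    cokerDegree n k l (Submodule.Quotient.mk v) = ∑ x, v x := by
  simp [cokerDegree]

/-- The Jacobian group of the I-graph is contained in the span of the differences of the classes
of consecutive vertices `u_0, …, u_{2k+2l-1}`. -/
theorem mem_span_of_mem_JacI {n k l : ℕ} [NeZero n] (hk : 1 ≤ k) (hkl : k ≤ l) (hn : 2 * l < n)
    (x : cokerM (lapI n k l ℤ)) (hx : x ∈ JacI n k l) :
    x ∈ Submodule.span ℤ (Set.range fun j : Fin (2 * k + 2 * l - 1) =>
      (Submodule.Quotient.mk (Pi.single (.inl ((j + 1 : ℕ) : ZMod n)) 1 -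
        Pi.single (.inl ((j : ℕ) : ZMod n)) 1) : cokerM (lapI n k l ℤ))) := by
  set D := Submodule.span ℤ (Set.range fun j : Fin (2 * k + 2 * l - 1) =>
      (Submodule.Quotient.mk (Pi.single (.inl ((j + 1 : ℕ) : ZMod n)) 1 -
        Pi.single (.inl ((j : ℕ) : ZMod n)) 1) : cokerM (lapI n k l ℤ)))
  let π : (ZMod n ⊕ ZMod n → ℤ) →ₗ[ℤ] cokerM (lapI n k l ℤ) ⧸ D :=
    D.mkQ ∘ₗ (LinearMap.range (lapI n k l ℤ).mulVecLin).mkQ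
  have hπ : ∀ v, π ((lapI n k l ℤ).mulVec v) = 0 := fun v => by
    have : (LinearMap.range (lapI n k l ℤ).mulVecLin).mkQ ((lapI n k l ℤ).mulVec v) = 0 :=
      (Submodule.Quotient.mk_eq_zero _).2 ⟨v, rfl⟩
    simp [π, this]
  have hwin : ∀ j : ℕ, j < 2 * k + 2 * l →
      π (Pi.single (.inl (j : ZMod n)) 1) = π (Pi.single (.inl 0) 1) := by
    intro j
    induction j with
    | zero => simp
    | succ j ih =>
      intro hj
      rw [← ih (by omega), ← sub_eq_zero, ← map_sub]
      exact (Submodule.Quotient.mk_eq_zero D).2 (Submodule.subset_span ⟨⟨j, by omega⟩, rfl⟩)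
  obtain ⟨hu, hv⟩ := IGraph_harmonic_eq_const hk (hk.trans hkl)
    (fun i => π (Pi.single (.inl i) 1)) (fun i => π (Pi.single (.inr i) 1))
    (fun i => by
      rw [← hπ (Pi.single (.inl i) 1), lapI_mulVec_single_inl (hk.trans hkl) hn]
      simp only [map_sub, map_add, map_smul])
    (fun i => by
      rw [← hπ (Pi.single (.inr i) 1), lapI_mulVec_single_inr hk (by omega)]
      simp only [map_sub, map_add, map_smul])
    _ hwin
  have hdeg : ∀ v, π v = (∑ y, v y) • π (Pi.single (.inl 0) 1) := fun v => by
    have hsum : v = ∑ y, v y • Pi.single y (1 : ℤ) := by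
      simpa using pi_eq_sum_univ' v
    conv_lhs => rw [hsum]
    rw [map_sum, Finset.sum_smul]
    refine Finset.sum_congr rfl fun y _ => ?_
    rw [map_smul]
    rcases y with i | i
    · rw [hu i]
    · rw [hv i]
  obtain ⟨v, rfl⟩ := Submodule.Quotient.mk_surjective _ x
  have hzero : ∑ y, v y = 0 := by
    rw [← cokerDegree_mk (k := k) (l := l)]
    obtain ⟨m, hm, hmx⟩ := isOfFinAddOrder_iff_nsmul_eq_zero.1 hx
    have := congrArg (cokerDegree n k l) hmx
    rw [map_nsmul, map_zero] at this
    exact (smul_eq_zero.1 this).resolve_left hm.ne'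
  have := hdeg v
  rw [hzero, zero_smul] at this
  exact (Submodule.Quotient.mk_eq_zero D).1 this

/-- The Jacobian group of the I-graph `I(n,k,l)` is generated by at most `2k + 2l - 1`
elements. -/
theorem jacobian_IGraph_generators (n k l : ℕ) [NeZero n]
    (hk : 1 ≤ k) (hkl : k ≤ l) (hn : 2 * l < n) (hcop : Nat.gcd k l = 1) :
    ∃ S : Finset (JacI n k l), S.card ≤ 2 * k + 2 * l - 1 ∧
      AddSubgroup.closure (S : Set (JacI n k l)) = ⊤ :=
  AddSubgroup.exists_finset_card_le_closure_eq_top _ _ (mem_span_of_mem_JacI hk hkl hn)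
end
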